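/- Let p be a prime, let r be a positive integer with r < p, and let G be a subgroup of 𝔽_p*. Then the number of x ∈ 𝔽_p such that 1 + s·x ∈ G for every s = 1, 2, …, r is at least (|G|/(p−1))^r · p − r·√p. -/

import Mathlib

open Polynomial


/-- polynomial with given coefficient row -/
noncomputable def rowP {F : Type*} [Field F] {n : ℕ} (v : Fin n → F) : F[X] :=
  ∑ i, C (v i) * X ^ (i : ℕ)

lemma rowP_coeff {F : Type*} [Field F] {n : ℕ} (v : Fin n → F) (i : Fin n) :
    (rowP v).coeff i = v i := by
  unfold rowP
  rw [finsetSum_coeff]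
  simp only [coeff_C_mul, coeff_X_pow]
  rw [Finset.sum_eq_single i]
  · simp
  · intro b _ hb
    have : (i : ℕ) ≠ b := fun h => hb (Fin.ext h.symm)
    simp [this]
  · simp

lemma rowP_natDegree {F : Type*} [Field F] {n : ℕ} (v : Fin (n+1) → F) :
    (rowP v).natDegree ≤ n := by
  unfold rowP
  refine natDegree_sum_le_of_forall_le _ _ ?_
  intro i _
  exact (natDegree_C_mul_X_pow_le _ _).trans (by have := i.2; omega)

lemma rowP_surj {F : Type*} [Field F] {n : ℕ} (f : F[X]) (hf : f.natDegree ≤ n) :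
    rowP (fun i : Fin (n+1) => f.coeff i) = f := by
  unfold rowP
  conv_rhs => rw [f.as_sum_range_C_mul_X_pow' (Nat.lt_succ_of_le hf)]
  rw [Fin.sum_univ_eq_sum_range (fun i => C (f.coeff i) * X ^ i)]

lemma rowP_add {F : Type*} [Field F] {n : ℕ} (v w : Fin n → F) :
    rowP (v + w) = rowP v + rowP w := by
  simp [rowP, add_mul, Finset.sum_add_distrib]

lemma rowP_eq_zero {F : Type*} [Field F] {n : ℕ} (v : Fin n → F) (h : rowP v = 0) : v = 0 := by
  ext i
  rw [← rowP_coeff v i, h]; simp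

/-- bivariate polynomial from an array -/
noncomputable def elP {F : Type*} [Field F] {d n : ℕ} : (Fin d → Fin n → F) →+ F[X][X] where
  toFun a := ∑ j, C (rowP (a j)) * X ^ (j : ℕ)
  map_zero' := by simp [rowP]
  map_add' a b := by simp [rowP_add, add_mul, Finset.sum_add_distrib]

lemma elP_apply {F : Type*} [Field F] {d n : ℕ} (a : Fin d → Fin n → F) :
    elP a = ∑ j, C (rowP (a j)) * X ^ (j : ℕ) := rfl

/-- bounded bivariate polynomials -/
def BdP {F : Type*} [Field F] (k N : ℕ) (Q : F[X][X]) : Prop :=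
  Q.natDegree ≤ N ∧ ∀ j, (Q.coeff j).natDegree ≤ k

lemma BdP.mono {F : Type*} [Field F] {k N k' N' : ℕ} {Q : F[X][X]} (h : BdP k N Q)
    (hk : k ≤ k') (hN : N ≤ N') : BdP k' N' Q :=
  ⟨h.1.trans hN, fun j => (h.2 j).trans hk⟩

lemma BdP.mul {F : Type*} [Field F] {k N k' N' : ℕ} {Q R : F[X][X]} (h : BdP k N Q)
    (h' : BdP k' N' R) : BdP (k + k') (N + N') (Q * R) := by
  refine ⟨natDegree_mul_le.trans (add_le_add h.1 h'.1), fun j => ?_⟩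
  rw [coeff_mul]
  refine natDegree_sum_le_of_forall_le _ _ fun x _ => ?_
  exact natDegree_mul_le.trans (add_le_add (h.2 _) (h'.2 _))

lemma BdP.pow {F : Type*} [Field F] {k N : ℕ} {Q : F[X][X]} (h : BdP k N Q) (n : ℕ) :
    BdP (n * k) (n * N) (Q ^ n) := by
  induction n with
  | zero =>
    refine ⟨by simp, fun j => ?_⟩
    rw [pow_zero, coeff_one]; split_ifs <;> simp
  | succ n ih =>
    rw [pow_succ]
    exact (ih.mul h).mono (by rw [Nat.succ_mul]) (by rw [Nat.succ_mul])

lemma BdP.sum {F ι : Type*} [Field F] {k N : ℕ} (s : Finset ι) {Q : ι → F[X][X]}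
    (h : ∀ i ∈ s, BdP k N (Q i)) : BdP k N (∑ i ∈ s, Q i) := by
  refine ⟨natDegree_sum_le_of_forall_le _ _ fun i hi => (h i hi).1, fun j => ?_⟩
  rw [finsetSum_coeff]
  exact natDegree_sum_le_of_forall_le _ _ fun i hi => (h i hi).2 j

lemma BdP.term {F : Type*} [Field F] {k N : ℕ} {f : F[X]} (hf : f.natDegree ≤ k) {j : ℕ}
    (hj : j ≤ N) : BdP k N (C f * X ^ j) := by
  refine ⟨(natDegree_C_mul_X_pow_le _ _).trans hj, fun i => ?_⟩
  rw [coeff_C_mul_X_pow]; split_ifs <;> simp [hf]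

lemma elP_bd {F : Type*} [Field F] {d n : ℕ} (a : Fin d → Fin (n+1) → F) :
    BdP n (d - 1) (elP a) := by
  rw [elP_apply]
  exact BdP.sum _ fun j _ => BdP.term (rowP_natDegree _) (by have := j.2; omega)

lemma mk_pow_eq {F : Type*} [Field F] {d : ℕ} (H : F[X]) (e : ℕ) :
    AdjoinRoot.mk (X ^ d - C H) (X ^ e) =
      AdjoinRoot.mk (X ^ d - C H) (C (H ^ (e / d)) * X ^ (e % d)) := by
  have h : AdjoinRoot.mk (X ^ d - C H) (X ^ d) = AdjoinRoot.mk (X ^ d - C H) (C H) := by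
    rw [← sub_eq_zero, ← map_sub, AdjoinRoot.mk_self]
  conv_lhs => rw [← Nat.div_add_mod e d, pow_add, pow_mul, map_mul, map_pow, h]
  simp

/-- reduction modulo `Y ^ d - H` -/
lemma reduceP {F : Type*} [Field F] {d : ℕ} (hd : 0 < d) (H : F[X]) {k N M : ℕ} {Q : F[X][X]}
    (h : BdP k N Q) (hN : N ≤ d * M) :
    ∃ a : Fin d → Fin (k + H.natDegree * M + 1) → F,
      AdjoinRoot.mk (X ^ d - C H) Q = AdjoinRoot.mk (X ^ d - C H) (elP a) := by
  have key : ∀ s : Finset ℕ, (∀ e ∈ s, e ≤ N) → ∃ a : Fin d → Fin (k + H.natDegree * M + 1) → F,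
      AdjoinRoot.mk (X ^ d - C H) (∑ e ∈ s, C (Q.coeff e) * X ^ e) =
        AdjoinRoot.mk (X ^ d - C H) (elP a) := by
    classical
    intro s
    induction s using Finset.induction_on with
    | empty => intro _; exact ⟨0, by simp⟩
    | insert e s he ih =>
      intro hs
      obtain ⟨a, ha⟩ := ih fun e' he' => hs e' (Finset.mem_insert_of_mem he')
      have heN := hs e (Finset.mem_insert_self _ _)
      have heM : e / d ≤ M := by
        rw [mul_comm] at hN
        exact Nat.div_le_of_le_mul (by rw [mul_comm]; exact heN.trans hN)
      let f : F[X] := Q.coeff e * H ^ (e / d)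
      have hf : f.natDegree ≤ k + H.natDegree * M := by
        refine natDegree_mul_le.trans (add_le_add (h.2 _) (natDegree_pow_le.trans ?_))
        rw [mul_comm]; exact Nat.mul_le_mul_left _ heM
      let b : Fin d → Fin (k + H.natDegree * M + 1) → F :=
        Pi.single ⟨e % d, Nat.mod_lt _ hd⟩ (fun i => f.coeff i)
      have hb : elP b = C f * X ^ (e % d) := by
        rw [elP_apply, Finset.sum_eq_single ⟨e % d, Nat.mod_lt _ hd⟩]
        · simp only [b, Pi.single_eq_same]
          rw [rowP_surj f hf]
        · intro j _ hj
          simp [b, Pi.single_eq_of_ne hj, rowP]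
        · simp
      refine ⟨b + a, ?_⟩
      rw [Finset.sum_insert he, map_add, ha, map_add, map_add, hb, map_mul, mk_pow_eq]
      simp [f, mul_assoc]
  obtain ⟨a, ha⟩ := key (Finset.range (N + 1)) fun e he => by
    rw [Finset.mem_range] at he; omega
  refine ⟨a, ?_⟩
  rw [← ha, ← Q.as_sum_range_C_mul_X_pow' (Nat.lt_succ_of_le h.1)]


lemma exists_root_ps {F : Type*} [Field F] (d : ℕ) (hd : (d : F) ≠ 0) (H : PowerSeries F)
    (hH : PowerSeries.constantCoeff H = 1) : ∃ Y : PowerSeries F, Y ^ d = H := by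
  have hd0 : d ≠ 0 := by rintro rfl; simp at hd
  have hh : HenselianRing (PowerSeries F) (Ideal.span {PowerSeries.X}) := inferInstance
  obtain ⟨a, ha, -⟩ := hh.is_henselian (X ^ d - C H) (monic_X_pow_sub_C H hd0) 1 (by
    rw [Ideal.mem_span_singleton, PowerSeries.X_dvd_iff]
    simp [hH]) (by
    apply IsUnit.map
    rw [PowerSeries.isUnit_iff_constantCoeff]
    rw [derivative_sub, derivative_C, sub_zero, derivative_X_pow]
    simp [hd])
  refine ⟨a, ?_⟩
  simpa [IsRoot, sub_eq_zero] using ha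

lemma indep_aux {F ι : Type*} [Field F] [Fintype ι] (d : ℕ) (τ : ι → F)
    (hτ : Function.Injective τ) (hτ0 : ∀ i, τ i ≠ 0) (b : ι → ℕ)
    (hb : ∀ n : ℕ, (∀ i, d ∣ n * b i) → d ∣ n) (n : ℕ) (w : F[X])
    (h : (∏ i, (1 + C (τ i) * X) ^ b i) ^ n = w ^ d) : d ∣ n := by
  apply hb
  intro i
  classical
  have hmul := congrArg (rootMultiplicity (-(τ i)⁻¹)) h
  have hne : ∀ j, (1 + C (τ j) * X : F[X]) ≠ 0 := by
    intro j hj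
    have := congrArg (eval 0) hj
    simp at this
  have hP : (∏ i, (1 + C (τ i) * X : F[X]) ^ b i) ≠ 0 :=
    Finset.prod_ne_zero_iff.2 fun j _ => pow_ne_zero _ (hne j)
  have hw : w ^ d ≠ 0 := by rw [← h]; exact pow_ne_zero _ hP
  rw [← count_roots, ← count_roots, roots_pow, roots_pow, roots_prod _ _ hP, Multiset.count_nsmul,
    Multiset.count_nsmul, Multiset.count_bind] at hmul
  have : (Multiset.map (fun j => Multiset.count (-(τ i)⁻¹) ((1 + C (τ j) * X : F[X]) ^ b j).roots)
      Finset.univ.val).sum = b i := by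
    change ∑ j, Multiset.count (-(τ i)⁻¹) ((1 + C (τ j) * X : F[X]) ^ b j).roots = b i
    have hr : ∀ j, (1 + C (τ j) * X : F[X]).roots = {-(τ j)⁻¹} := by
      intro j
      have : (1 + C (τ j) * X : F[X]) = C (τ j) * (X - C (-(τ j)⁻¹)) := by
        rw [mul_sub, ← C_mul]; simp [hτ0 j]; ring
      rw [this, roots_C_mul _ (hτ0 j), roots_X_sub_C]
    rw [Finset.sum_eq_single i]
    · simp [roots_pow, hr]
    · intro j _ hj
      rw [roots_pow, hr, Multiset.count_nsmul, Multiset.count_singleton, if_neg, mul_zero]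
      intro hh
      apply hj
      apply hτ
      exact (inv_injective (neg_injective hh)).symm
    · simp
  rw [this] at hmul
  exact ⟨_, hmul⟩

lemma indep_field {F ι Ω : Type*} [Field F] [Fintype ι] [Field Ω] [Algebra F[X] Ω]
    (hinj : Function.Injective (algebraMap F[X] Ω)) (d : ℕ) (hd : 0 < d) (τ : ι → F)
    (hτ : Function.Injective τ) (hτ0 : ∀ i, τ i ≠ 0) (b : ι → ℕ)
    (hb : ∀ n : ℕ, (∀ i, d ∣ n * b i) → d ∣ n) (y : Ω)
    (hyd : y ^ d = algebraMap F[X] Ω (∏ i, (1 + C (τ i) * X) ^ b i : F[X]))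
    (Q : F[X][X]) (hQ : Q.natDegree < d) (hyQ : aeval y Q = 0) : Q = 0 := by
  set H : F[X] := ∏ i, (1 + C (τ i) * X) ^ b i with hH
  by_contra hQ0
  have : FaithfulSMul F[X] Ω := (faithfulSMul_iff_algebraMap_injective _ _).2 hinj
  let : Algebra (FractionRing F[X]) Ω := FractionRing.liftAlgebra F[X] Ω
  have : IsScalarTower F[X] (FractionRing F[X]) Ω := FractionRing.isScalarTower_liftAlgebra _ _
  let K := FractionRing F[X]
  have hyint : IsIntegral F[X] y := by
    refine ⟨X ^ d - C H, monic_X_pow_sub_C _ hd.ne', ?_⟩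
    rw [eval₂_sub, eval₂_pow, eval₂_X, eval₂_C, hyd, sub_self]
  set g := minpoly F[X] y with hg
  have hgmon : g.Monic := minpoly.monic hyint
  have hgdeg : g.natDegree < d := by
    have : g ∣ Q := minpoly.isIntegrallyClosed_dvd hyint hyQ
    exact (natDegree_le_of_dvd this hQ0).trans_lt hQ
  have hgpos : 0 < g.natDegree := minpoly.natDegree_pos hyint
  -- norm argument
  have hyintK : IsIntegral K y := hyint.tower_top
  have hKm : minpoly K y = g.map (algebraMap F[X] K) :=
    minpoly.isIntegrallyClosed_eq_field_fractions' K hyint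
  have hN : Algebra.norm K (IntermediateField.AdjoinSimple.gen K y) =
      (-1) ^ g.natDegree * algebraMap F[X] K (g.coeff 0) := by
    have h1 := Algebra.PowerBasis.norm_gen_eq_coeff_zero_minpoly (IntermediateField.adjoin.powerBasis hyintK)
    rw [IntermediateField.adjoin.powerBasis_gen, IntermediateField.adjoin.powerBasis_dim] at h1
    rw [h1, IntermediateField.minpoly_gen, hKm, coeff_map, hgmon.natDegree_map]
  have hfin : Module.finrank K (IntermediateField.adjoin K {y}) = g.natDegree := by
    rw [IntermediateField.adjoin.finrank hyintK, hKm, hgmon.natDegree_map]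
  have hgd : (IntermediateField.AdjoinSimple.gen K y) ^ d =
      algebraMap K _ (algebraMap F[X] K H) := by
    apply Subtype.ext
    change y ^ d = algebraMap K Ω (algebraMap F[X] K H)
    rw [hyd, ← IsScalarTower.algebraMap_apply]
  have h2 := congrArg (Algebra.norm K) hgd
  rw [map_pow, Algebra.norm_algebraMap, hfin, hN] at h2
  have h3 : H ^ g.natDegree = ((-1) ^ g.natDegree * g.coeff 0) ^ d := by
    apply IsFractionRing.injective F[X] K
    rw [map_pow, ← h2]; simp
  have := indep_aux d τ hτ hτ0 b hb _ _ h3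
  exact absurd (Nat.le_of_dvd hgpos this) (by omega)

lemma indep_ps {F ι : Type*} [Field F] [Fintype ι] (d : ℕ) (hd : 0 < d) (τ : ι → F)
    (hτ : Function.Injective τ) (hτ0 : ∀ i, τ i ≠ 0) (b : ι → ℕ)
    (hb : ∀ n : ℕ, (∀ i, d ∣ n * b i) → d ∣ n) (Y : PowerSeries F)
    (hY : Y ^ d = ((∏ i, (1 + C (τ i) * X) ^ b i : F[X]) : PowerSeries F))
    (Q : F[X][X]) (hQ : Q.natDegree < d)
    (h0 : eval₂ (Polynomial.coeToPowerSeries.ringHom (R := F)) Y Q = 0) : Q = 0 := by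
  let φ : F[X] →+* FractionRing (PowerSeries F) :=
    (algebraMap (PowerSeries F) (FractionRing (PowerSeries F))).comp
      (Polynomial.coeToPowerSeries.ringHom (R := F))
  have hφ : Function.Injective φ :=
    (IsFractionRing.injective (PowerSeries F) _).comp (Polynomial.coe_injective F)
  have := @indep_field F ι (FractionRing (PowerSeries F)) _ _ _ φ.toAlgebra hφ d hd τ hτ hτ0 b hb
    (algebraMap _ _ Y) (by rw [← map_pow, hY]; rfl) Q hQ (by
      have := congrArg (algebraMap (PowerSeries F) (FractionRing (PowerSeries F))) h0
      rw [hom_eval₂, map_zero] at this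
      exact this)
  exact this


lemma BdP.add {F : Type*} [Field F] {k N : ℕ} {Q R : F[X][X]} (h : BdP k N Q)
    (h' : BdP k N R) : BdP k N (Q + R) := by
  refine ⟨natDegree_add_le_of_degree_le h.1 h'.1, fun j => ?_⟩
  rw [coeff_add]
  exact natDegree_add_le_of_degree_le (h.2 j) (h'.2 j)

lemma reduceP' {F : Type*} [Field F] {d : ℕ} (hd : 0 < d) (H : F[X]) {k N : ℕ} (M k' : ℕ)
    {Q : F[X][X]} (h : BdP k N Q) (hN : N ≤ d * M) (hk : k + H.natDegree * M ≤ k') :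
    ∃ a : Fin d → Fin (k' + 1) → F,
      AdjoinRoot.mk (X ^ d - C H) Q = AdjoinRoot.mk (X ^ d - C H) (elP a) := by
  obtain ⟨c, rfl⟩ := Nat.exists_eq_add_of_le hk
  rw [show k + H.natDegree * M + c = (k + c) + H.natDegree * M by ring]
  exact reduceP hd H (h.mono (Nat.le_add_right k c) le_rfl) hN

lemma elP_coeff {F : Type*} [Field F] {d n : ℕ} (a : Fin d → Fin n → F) (j : Fin d) :
    (elP a).coeff j = rowP (a j) := by
  rw [elP_apply, finsetSum_coeff]
  simp only [coeff_C_mul, coeff_X_pow]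
  rw [Finset.sum_eq_single j]
  · simp
  · intro b _ hb
    have : (j : ℕ) ≠ b := fun h => hb (Fin.ext h.symm)
    simp [this]
  · simp

lemma elP_eq_zero {F : Type*} [Field F] {d n : ℕ} (a : Fin d → Fin n → F) (h : elP a = 0) :
    a = 0 := by
  funext j
  apply rowP_eq_zero
  rw [← elP_coeff, h]; simp

lemma elP_natDegree_lt {F : Type*} [Field F] {d n : ℕ} (hd : 0 < d) (a : Fin d → Fin (n+1) → F) :
    (elP a).natDegree < d := by
  have := (elP_bd a).1; omega

/-- evaluation in power series -/
noncomputable def evY {F : Type*} [Field F] (Y : PowerSeries F) : F[X][X] →+* PowerSeries F :=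
  eval₂RingHom (Polynomial.coeToPowerSeries.ringHom (R := F)) Y

lemma evY_of_mk {F : Type*} [Field F] {d : ℕ} {H : F[X]} {Y : PowerSeries F}
    (hY : Y ^ d = (H : PowerSeries F)) {Q R : F[X][X]}
    (h : AdjoinRoot.mk (X ^ d - C H) Q = AdjoinRoot.mk (X ^ d - C H) R) : evY Y Q = evY Y R := by
  rw [AdjoinRoot.mk_eq_mk] at h
  obtain ⟨S, hS⟩ := h
  have h2 : evY Y (X ^ d - C H) = 0 := by
    simp [evY, hY]
  rw [← sub_eq_zero, ← map_sub, hS, map_mul, h2, zero_mul]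

lemma pigeon {F G A : Type*} [Field F] [Fintype F] [AddCommGroup G] [Fintype G] [AddCommGroup A]
    {d k : ℕ} (f : G →+ A) (g : (Fin d → Fin (k+1) → F) → A)
    (hfg : ∀ x, ∃ a, f x = g a) (hcard : Fintype.card F ^ (d * (k+1)) < Fintype.card G) :
    ∃ x, x ≠ 0 ∧ f x = 0 := by
  by_contra hcon
  push Not at hcon
  have hinj : Function.Injective f := by
    rw [injective_iff_map_eq_zero]
    intro x hx
    by_contra h
    exact hcon x h hx
  choose a ha using hfg
  have hainj : Function.Injective a := by
    intro x y hxy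
    apply hinj
    rw [ha, ha, hxy]
  have := Fintype.card_le_of_injective a hainj
  rw [Fintype.card_fun, Fintype.card_fun, Fintype.card_fin, Fintype.card_fin, ← pow_mul,
    mul_comm] at this
  omega

lemma ordbound {F : Type*} [Field F] [Fintype F] {d : ℕ} (hd : 0 < d) {H : F[X]}
    {Y : PowerSeries F} (hY : Y ^ d = (H : PowerSeries F))
    (hind : ∀ Q : F[X][X], Q.natDegree < d → evY Y Q = 0 → Q = 0)
    {l : ℕ} (a : Fin d → Fin (l+1) → F) (ha : a ≠ 0) :
    (evY Y (elP a)).order ≤ (((d + 1) * (l + 2 * H.natDegree) : ℕ) : ℕ∞) := by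
  set D := H.natDegree with hD
  set K := (d + 1) * (l + 2 * D) with hK
  set k := d * (l + 2 * D) with hk
  have hKk : K = k + l + 2 * D := by rw [hK, hk]; ring
  let f : ((Fin d → Fin (k+1) → F) × (Fin (K+1) → F)) →+ AdjoinRoot (X ^ d - C H) :=
    { toFun := fun x => AdjoinRoot.mk (X ^ d - C H) (elP a * elP x.1 + C (rowP x.2) * X ^ 0)
      map_zero' := by simp [rowP]
      map_add' := fun x y => by
        rw [← map_add]; congr 1
        simp [rowP_add]; ring }
  obtain ⟨⟨w, e⟩, hne, h0⟩ := pigeon (F := F) (d := d) (k := K) f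
    (fun a => AdjoinRoot.mk (X ^ d - C H) (elP a)) (by
      intro x
      obtain ⟨a1, h1⟩ := reduceP' hd H 2 K ((elP_bd a).mul (elP_bd x.1)) (by omega) (by omega)
      obtain ⟨a2, h2⟩ := reduceP' hd H 0 K (BdP.term (rowP_natDegree x.2) (le_refl 0)) (by omega)
        (by omega)
      refine ⟨a1 + a2, ?_⟩
      change AdjoinRoot.mk (X ^ d - C H) (elP a * elP x.1 + C (rowP x.2) * X ^ 0) = _
      rw [map_add, h1, h2, map_add, map_add]) (by
      rw [Fintype.card_prod, Fintype.card_fun, Fintype.card_fun, Fintype.card_fun, Fintype.card_fin,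
        Fintype.card_fin, Fintype.card_fin, ← pow_mul, ← pow_add]
      refine Nat.pow_lt_pow_right Fintype.one_lt_card ?_
      have : d * (K + 1) = (k + 1) * d + k := by rw [hKk, hk]; ring
      omega)
  have hu : evY Y (elP a) ≠ 0 := by
    intro h
    exact ha (elP_eq_zero _ (hind _ (elP_natDegree_lt hd a) h))
  have h1 : evY Y (elP a * elP w + C (rowP e) * X ^ 0) = 0 := by
    rw [evY_of_mk hY (R := 0)]
    · simp
    · rw [map_zero]; exact h0
  have h2 : evY Y (elP a) * evY Y (elP w) = -((rowP e : F[X]) : PowerSeries F) := by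
    rw [eq_neg_iff_add_eq_zero, ← h1, map_add, map_mul]
    simp [evY]
  have he : rowP e ≠ 0 := by
    intro he
    rw [he] at h2
    simp only [Polynomial.coe_zero, neg_zero, mul_eq_zero] at h2
    have hw := elP_eq_zero _ (hind _ (elP_natDegree_lt hd w) (h2.resolve_left hu))
    exact hne (by rw [hw, rowP_eq_zero e he]; rfl)
  have h3 := congrArg PowerSeries.order h2
  rw [PowerSeries.order_mul, PowerSeries.order_neg] at h3
  refine le_self_add.trans (h3.le.trans ?_)
  refine (PowerSeries.order_le (rowP e).natDegree ?_).trans ?_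
  · rw [Polynomial.coeff_coe]
    simpa using he
  · exact_mod_cast rowP_natDegree e

lemma orders_exist {F : Type*} [Field F] [Fintype F] {d : ℕ} (hd : 0 < d) {H : F[X]}
    {Y : PowerSeries F} (hY : Y ^ d = (H : PowerSeries F))
    (hind : ∀ Q : F[X][X], Q.natDegree < d → evY Y Q = 0 → Q = 0) (m : ℕ) :
    ∃ (O : Finset ℕ) (s : O → (Fin d → Fin (m+1) → F)), d * (m + 1) ≤ O.card ∧
      ∀ o : O, (evY Y (elP (s o))).order = ((o : ℕ) : ℕ∞) := by
  classical
  let K := (d + 1) * (m + 2 * H.natDegree)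
  let O : Finset ℕ := (Finset.range (K + 1)).filter fun o =>
    ∃ a : Fin d → Fin (m+1) → F, (evY Y (elP a)).order = (o : ℕ∞)
  have hO : ∀ o : O, ∃ a : Fin d → Fin (m+1) → F, (evY Y (elP a)).order = ((o : ℕ) : ℕ∞) :=
    fun o => (Finset.mem_filter.1 o.2).2
  choose s hs using hO
  refine ⟨O, s, ?_, hs⟩
  let f : (Fin d → Fin (m+1) → F) →+ (O → F) :=
    { toFun := fun a o => PowerSeries.coeff (o : ℕ) (evY Y (elP a))
      map_zero' := by ext; simp
      map_add' := fun a b => by ext; simp }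
  have hf : Function.Injective f := by
    rw [injective_iff_map_eq_zero]
    intro a ha
    by_contra hne
    have hb := ordbound hd hY hind a hne
    have hlt := hb.trans_lt (ENat.natCast_lt_top _)
    obtain ⟨n, hn⟩ := ENat.ne_top_iff_exists.1 hlt.ne
    have hnK : n ≤ K := by rw [← hn] at hb; exact_mod_cast hb
    have hnO : n ∈ O := Finset.mem_filter.2 ⟨Finset.mem_range.2 (by omega), a, hn.symm⟩
    have h1 : PowerSeries.coeff n (evY Y (elP a)) = 0 := congrFun ha ⟨n, hnO⟩
    exact ((PowerSeries.order_eq_nat).1 hn.symm).1 h1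
  have hc := Fintype.card_le_of_injective f hf
  rw [Fintype.card_fun, Fintype.card_fun, Fintype.card_fun, Fintype.card_fin, Fintype.card_fin,
    ← pow_mul, Fintype.card_coe] at hc
  have := (Nat.pow_le_pow_iff_right (Fintype.one_lt_card (α := F))).1 hc
  rwa [mul_comm]

lemma psi_ne {F : Type*} [Field F] [Fintype F] {d : ℕ} (hd : 0 < d) {H : F[X]}
    {Y : PowerSeries F} (hY : Y ^ d = (H : PowerSeries F))
    (hind : ∀ Q : F[X][X], Q.natDegree < d → evY Y Q = 0 → Q = 0) {m l P : ℕ}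
    (hP : (d + 1) * (l + 2 * H.natDegree) < P)
    (O : Finset ℕ) (s : O → (Fin d → Fin (m+1) → F))
    (hs : ∀ o : O, (evY Y (elP (s o))).order = ((o : ℕ) : ℕ∞))
    (u : O → (Fin d → Fin (l+1) → F)) (hu : u ≠ 0) :
    evY Y (∑ o, elP (u o) * elP (s o) ^ P) ≠ 0 := by
  classical
  intro h0
  have hex : (Finset.univ.filter fun o : O => u o ≠ 0).Nonempty := by
    by_contra h
    rw [Finset.not_nonempty_iff_eq_empty, Finset.filter_eq_empty_iff] at h
    apply hu
    funext o
    simpa using h (Finset.mem_univ o)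
  obtain ⟨o, ho, hmin⟩ := Finset.exists_min_image _ (fun o : O => (o : ℕ)) hex
  have huo : u o ≠ 0 := (Finset.mem_filter.1 ho).2
  rw [map_sum, ← Finset.add_sum_erase _ _ (Finset.mem_univ o)] at h0
  have hrest : (PowerSeries.X : PowerSeries F) ^ (P * ((o : ℕ) + 1)) ∣
      ∑ x ∈ Finset.univ.erase o, evY Y (elP (u x) * elP (s x) ^ P) := by
    refine Finset.dvd_sum fun x hx => ?_
    by_cases hux : u x = 0
    · rw [hux]; simp
    have hle := hmin x (Finset.mem_filter.2 ⟨Finset.mem_univ _, hux⟩)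
    have hxo : (x : ℕ) ≠ o := fun h => (Finset.mem_erase.1 hx).1 (Subtype.ext h)
    rw [map_mul, map_pow]
    refine Dvd.dvd.mul_left ?_ _
    rw [mul_comm, pow_mul]
    refine pow_dvd_pow_of_dvd ?_ _
    rw [PowerSeries.X_pow_dvd_iff]
    intro i hi
    apply PowerSeries.coeff_of_lt_order
    rw [hs]
    exact_mod_cast (by omega : i < (x : ℕ))
  have h1 : (PowerSeries.X : PowerSeries F) ^ (P * ((o : ℕ) + 1)) ∣
      evY Y (elP (u o) * elP (s o) ^ P) := by
    rw [eq_neg_of_add_eq_zero_left h0]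
    exact hrest.neg_right
  rw [PowerSeries.X_pow_dvd_iff] at h1
  replace h1 := PowerSeries.nat_le_order _ _ h1
  rw [map_mul, map_pow, PowerSeries.order_mul, PowerSeries.order_pow, hs] at h1
  have hb := ordbound hd hY hind (u o) huo
  obtain ⟨n, hn⟩ := ENat.ne_top_iff_exists.1 (hb.trans_lt (ENat.natCast_lt_top _)).ne
  rw [← hn] at hb h1
  have hb' : n ≤ (d + 1) * (l + 2 * H.natDegree) := by exact_mod_cast hb
  have h1' : P * ((o : ℕ) + 1) ≤ n + P * (o : ℕ) := by
    rw [nsmul_eq_mul] at h1; exact_mod_cast h1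
  rw [mul_add] at h1'
  omega


/-- twist `Y ↦ c Y` -/
noncomputable def sgP {F : Type*} [Field F] (c : F) : F[X][X] →+* F[X][X] :=
  eval₂RingHom C (C (C c) * X)

lemma sgP_elP {F : Type*} [Field F] {d n : ℕ} (c : F) (a : Fin d → Fin n → F) :
    sgP c (elP a) = elP (fun j i => c ^ (j : ℕ) * a j i) := by
  rw [elP_apply, elP_apply, map_sum]
  refine Finset.sum_congr rfl fun j _ => ?_
  have : rowP (fun i => c ^ (j : ℕ) * a j i) = C (c ^ (j : ℕ)) * rowP (a j) := by
    simp [rowP, Finset.mul_sum, mul_assoc]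
  rw [this]
  simp [sgP, mul_pow]
  ring

/-- specialisation at `x₀` -/
noncomputable def spP {F : Type*} [Field F] (x₀ : F) (g : F[X]) : F[X][X] →+* AdjoinRoot g :=
  (AdjoinRoot.mk g).comp (mapRingHom (evalRingHom x₀))

lemma spP_frob {F : Type*} [Field F] [Fintype F] (p μ : ℕ) [Fact p.Prime] [CharP F p]
    (hq : Fintype.card F = p ^ μ) {d e : ℕ} (hd : 0 < d) (hde : p ^ μ = d * e + 1) (x₀ c h₀ : F)
    (hc : h₀ ^ e = c) (Q : F[X][X]) :
    spP x₀ (X ^ d - C h₀) Q ^ (p ^ μ) = spP x₀ (X ^ d - C h₀) (sgP c Q) := by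
  have hnt : Nontrivial (AdjoinRoot (X ^ d - C h₀)) := AdjoinRoot.nontrivial _ (by
    rw [degree_X_pow_sub_C hd]; exact_mod_cast hd.ne')
  have hchar : CharP (AdjoinRoot (X ^ d - C h₀)) p :=
    charP_of_injective_algebraMap (algebraMap F _).injective p
  have key : ((iterateFrobenius (AdjoinRoot (X ^ d - C h₀)) p μ).comp (spP x₀ (X ^ d - C h₀))) =
      (spP x₀ (X ^ d - C h₀)).comp (sgP c) := by
    have hroot : AdjoinRoot.root (X ^ d - C h₀) ^ d = AdjoinRoot.of _ h₀ := by
      have := AdjoinRoot.mk_self (f := X ^ d - C h₀)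
      rw [map_sub, sub_eq_zero] at this
      simpa using this
    refine Polynomial.ringHom_ext' (Polynomial.ringHom_ext' (RingHom.ext fun a => ?_) ?_) ?_
    · simp [spP, sgP, iterateFrobenius_def, ← map_pow, ← hq, FiniteField.pow_card]
    · simp [spP, sgP, iterateFrobenius_def, ← map_pow, ← hq, FiniteField.pow_card]
    · simp only [RingHom.comp_apply, spP, sgP, iterateFrobenius_def]
      simp only [coe_mapRingHom, map_X, AdjoinRoot.mk_X, coe_eval₂RingHom, eval₂_X,
        map_mul, Polynomial.map_C]
      rw [hde, pow_succ, pow_mul, hroot, ← map_pow, hc]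
      simp
  have := RingHom.congr_fun key Q
  simpa [iterateFrobenius_def] using this

lemma stepanov_core {F : Type*} [Field F] [Fintype F] [DecidableEq F] (p μ : ℕ) [Fact p.Prime]
    [CharP F p]
    (hq : Fintype.card F = p ^ (μ + μ)) {d e : ℕ} (hd : 0 < d) (hde : p ^ (μ + μ) = d * e + 1)
    {H : F[X]}
    {Y : PowerSeries F} (hY : Y ^ d = (H : PowerSeries F))
    (hind : ∀ Q : F[X][X], Q.natDegree < d → evY Y Q = 0 → Q = 0) {m l : ℕ}
    (h1 : (d + 1) * (l + 2 * H.natDegree) < p ^ μ)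
    (h2 : l * p ^ μ + m + H.natDegree * (p ^ μ + 1) + 1 < d * ((l + 1) * (m + 1)))
    (c : F) (hc0 : c ≠ 0) :
    (Finset.univ.filter fun x : F => (H.eval x) ^ e = c).card ≤
      l + m * p ^ μ + H.natDegree * (p ^ μ + 1) := by
  set P := p ^ μ with hP
  set D := H.natDegree with hD
  obtain ⟨O, s, hO, hs⟩ := orders_exist hd hY hind m
  let f : (O → (Fin d → Fin (l+1) → F)) →+ AdjoinRoot (X ^ d - C H) :=
    { toFun := fun u => AdjoinRoot.mk (X ^ d - C H) (∑ o, elP (u o) ^ P * sgP c (elP (s o)))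
      map_zero' := by
        have : P ≠ 0 := pow_ne_zero _ (Fact.out : p.Prime).ne_zero
        simp [this]
      map_add' := fun x y => by
        rw [← map_add, ← Finset.sum_add_distrib]; congr 1
        refine Finset.sum_congr rfl fun o _ => ?_
        rw [Pi.add_apply, map_add, hP, add_pow_char_pow, add_mul] }
  obtain ⟨u, hu, hu0⟩ := pigeon (F := F) (d := d) (k := l * P + m + D * (P + 1)) f
    (fun a => AdjoinRoot.mk (X ^ d - C H) (elP a)) (by
      intro u
      refine reduceP' hd H (P + 1) _ (k := P * l + m) (N := P * (d - 1) + (d - 1))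
        (BdP.sum _ fun o _ => ?_) ?_ ?_
      · rw [sgP_elP]
        exact ((elP_bd (u o)).pow P).mul (elP_bd _)
      · obtain ⟨d', rfl⟩ : ∃ d', d = d' + 1 := ⟨d - 1, by omega⟩
        simp only [Nat.add_sub_cancel]; ring_nf; omega
      · rw [mul_comm P l]) (by
      rw [Fintype.card_fun, Fintype.card_fun, Fintype.card_fun, Fintype.card_fin,
        Fintype.card_fin, Fintype.card_coe, ← pow_mul, ← pow_mul]
      refine Nat.pow_lt_pow_right Fintype.one_lt_card ?_
      calc d * (l * P + m + D * (P + 1) + 1) < d * (d * ((l + 1) * (m + 1))) :=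
            Nat.mul_lt_mul_of_pos_left h2 hd
        _ = (l + 1) * (d * (d * (m + 1))) := by ring
        _ ≤ (l + 1) * (d * O.card) := by gcongr
        _ = _ := by ring)
  set Ψ : F[X][X] := ∑ o, elP (u o) * elP (s o) ^ P with hΨ
  have hΨ0 : evY Y Ψ ≠ 0 := psi_ne hd hY hind h1 O s hs u hu
  obtain ⟨a, ha⟩ := reduceP' hd H (P + 1) (l + m * P + D * (P + 1)) (k := l + P * m)
    (N := (d - 1) + P * (d - 1)) (Q := Ψ)
    (BdP.sum _ fun o _ => (elP_bd (u o)).mul ((elP_bd (s o)).pow P)) (by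
      obtain ⟨d', rfl⟩ : ∃ d', d = d' + 1 := ⟨d - 1, by omega⟩
      simp only [Nat.add_sub_cancel]; ring_nf; omega) (by rw [mul_comm P m])
  have hane : a ≠ 0 := by
    rintro rfl
    rw [evY_of_mk hY ha] at hΨ0
    simp at hΨ0
  obtain ⟨j, hj⟩ : ∃ j, a j ≠ 0 := by
    by_contra h
    push Not at h
    exact hane (funext h)
  have hrow : rowP (a j) ≠ 0 := fun h => hj (rowP_eq_zero _ h)
  have hsub : (Finset.univ.filter fun x : F => (H.eval x) ^ e = c) ⊆ (rowP (a j)).roots.toFinset := by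
    intro x hx
    have hx := (Finset.mem_filter.1 hx).2
    rw [Multiset.mem_toFinset, mem_roots hrow, IsRoot]
    set h₀ := H.eval x with hh₀
    let φ := spP x (X ^ d - C h₀)
    have hfrob : ∀ Q, φ Q ^ (p ^ (μ + μ)) = φ (sgP c Q) :=
      spP_frob p (μ + μ) hq hd hde x c h₀ hx
    have hφmk : ∀ Q R, AdjoinRoot.mk (X ^ d - C H) Q = AdjoinRoot.mk (X ^ d - C H) R →
        φ Q = φ R := by
      intro Q R h
      rw [AdjoinRoot.mk_eq_mk] at h
      obtain ⟨S, hS⟩ := h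
      have h2 : φ (X ^ d - C H) = 0 := by
        have : (mapRingHom (evalRingHom x)) (X ^ d - C H : F[X][X]) = X ^ d - C h₀ := by
          simp [hh₀]
        simp only [φ, spP, RingHom.comp_apply]
        rw [this, AdjoinRoot.mk_self]
      rw [← sub_eq_zero, ← map_sub, hS, map_mul, h2, zero_mul]
    have hnt : Nontrivial (AdjoinRoot (X ^ d - C h₀)) := AdjoinRoot.nontrivial _ (by
      rw [degree_X_pow_sub_C hd]; exact_mod_cast hd.ne')
    have hchar : CharP (AdjoinRoot (X ^ d - C h₀)) p :=
      charP_of_injective_algebraMap (algebraMap F _).injective p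
    have hpow : φ Ψ ^ P = 0 := by
      have h3 : φ (∑ o, elP (u o) ^ P * sgP c (elP (s o))) = φ 0 := hφmk _ _ (by
        rw [map_zero]; exact hu0)
      rw [map_zero, map_sum] at h3
      rw [hΨ, map_sum, hP, sum_pow_char_pow, ← h3]
      refine Finset.sum_congr rfl fun o _ => ?_
      rw [map_mul, map_mul, ← hfrob, map_pow, map_pow, mul_pow, ← pow_mul, ← pow_add]
    have h4 : φ (sgP c (elP a)) = 0 := by
      rw [← hfrob, ← hφmk _ _ ha, pow_add, pow_mul, ← hP, hpow]
      exact zero_pow (pow_ne_zero _ (Fact.out : p.Prime).ne_zero)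
    simp only [φ, spP, RingHom.comp_apply, AdjoinRoot.mk_eq_zero] at h4
    have h5 := eq_zero_of_dvd_of_degree_lt h4 (by
      rw [degree_X_pow_sub_C hd, sgP_elP]
      refine (degree_map_le).trans_lt ?_
      refine degree_le_natDegree.trans_lt ?_
      exact_mod_cast elP_natDegree_lt hd _)
    have h6 := congrArg (fun Q => coeff Q (j : ℕ)) h5
    simp only [coe_mapRingHom, coeff_map, sgP_elP, elP_coeff, coeff_zero] at h6
    have : rowP (fun i => c ^ (j : ℕ) * a j i) = C (c ^ (j : ℕ)) * rowP (a j) := by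
      simp [rowP, Finset.mul_sum, mul_assoc]
    rw [this] at h6
    simpa [hc0] using h6
  calc _ ≤ (rowP (a j)).roots.toFinset.card := Finset.card_le_card hsub
    _ ≤ (rowP (a j)).roots.card := Multiset.toFinset_card_le _
    _ ≤ _ := (card_roots' _).trans (rowP_natDegree _)


lemma stepanov {F ι : Type*} [Field F] [Fintype F] [DecidableEq F] [Fintype ι] (p μ : ℕ)
    [Fact p.Prime] [CharP F p]
    (hq : Fintype.card F = p ^ (μ + μ)) {d e : ℕ} (hd : 0 < d) (hdp : d ∣ p - 1)
    (hde : p ^ (μ + μ) = d * e + 1)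
    (τ : ι → F) (hτ : Function.Injective τ) (hτ0 : ∀ i, τ i ≠ 0) (b : ι → ℕ)
    (hb : ∀ n : ℕ, (∀ i, d ∣ n * b i) → d ∣ n) (c : F) (hc0 : c ≠ 0) :
    d * (Finset.univ.filter fun x : F => (∏ i, (1 + τ i * x) ^ b i) ^ e = c).card ≤
      p ^ μ * p ^ μ + d * d * (20 * (∑ i, b i) + 20) * p ^ μ := by
  have hp : p.Prime := Fact.out
  set H : F[X] := ∏ i, (1 + C (τ i) * X) ^ b i with hH
  have hD : H.natDegree ≤ ∑ i, b i := by
    refine (natDegree_prod_le _ _).trans (Finset.sum_le_sum fun i _ => ?_)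
    refine natDegree_pow_le.trans ?_
    have : (1 + C (τ i) * X : F[X]).natDegree ≤ 1 := by
      rw [add_comm, ← C_1]; exact natDegree_linear_le
    nlinarith
  have heval : ∀ x, H.eval x = ∏ i, (1 + τ i * x) ^ b i := by
    intro x; simp [hH, eval_prod]
  have hdF : (d : F) ≠ 0 := by
    rw [Ne, CharP.cast_eq_zero_iff F p]
    intro h
    have h1 := Nat.le_of_dvd hd h
    have h2 := Nat.le_of_dvd (by have := hp.two_le; omega) hdp
    have := hp.two_le
    omega
  obtain ⟨Y, hY⟩ := exists_root_ps d hdF (H : PowerSeries F) (by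
    rw [Polynomial.constantCoeff_coe, coeff_zero_eq_eval_zero, heval]; simp)
  have hind : ∀ Q : F[X][X], Q.natDegree < d → evY Y Q = 0 → Q = 0 := fun Q hQ h =>
    indep_ps d hd τ hτ hτ0 b hb Y hY Q hQ h
  have hPd : d ∣ p ^ μ - 1 := hdp.trans (by simpa using Nat.sub_dvd_pow_sub_pow p 1 μ)
  obtain ⟨w, hw⟩ := hPd
  have hPpos : 0 < p ^ μ := pow_pos hp.pos _
  have hPw : p ^ μ = d * w + 1 := by omega
  simp only [← heval]
  set A := (Finset.univ.filter fun x : F => (H.eval x) ^ e = c).card with hA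
  set S := ∑ i, b i
  have core := fun m l => stepanov_core (m := m) (l := l) p μ hq hd hde hY hind
  set D := H.natDegree with hDdef
  have hAq : A ≤ p ^ μ * p ^ μ := by
    rw [← pow_add, ← hq]; exact Finset.card_le_univ _
  set P := p ^ μ with hP
  by_cases hbig : 9 * D + 8 ≤ w
  · have hl4 : w + 1 ≤ 4 * (w / 4 + 1) := by omega
    have hl4' : 4 * (w / 4) ≤ w := by omega
    set l := w / 4
    have hdD : w ≤ d * w := Nat.le_mul_of_pos_left w hd
    have h := core (w + 8 * D + 7) l (by nlinarith) (by
      have e1 : d * ((l + 1) * (w + 8 * D + 7 + 1)) =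
        (l + 1) * (d * w) + (l + 1) * (d * (8 * D + 8)) := by ring
      have e2 : P ≤ 4 * d * (l + 1) := by rw [hPw]; nlinarith
      have e3 : 2 * (l + 1) * (d * (8 * D + 8)) ≥ P * (4 * D + 4) := by nlinarith
      have e4 : (l + 1) * (d * w) = l * P + P - (l + 1) := by
        have : (l + 1) * (d * w) + (l + 1) = l * P + P := by rw [hPw]; ring
        omega
      have e5 : l + 1 ≤ P := by omega
      rw [e1, e4]
      have e6 : P * (4 * D + 4) = 4 * (D * P) + 4 * P := by ring
      have e7 : D * (P + 1) = D * P + D := by ring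
      have e8 : 2 * (l + 1) * (d * (8 * D + 8)) = 2 * ((l + 1) * (d * (8 * D + 8))) := by ring
      rw [e6, e8] at e3
      rw [e7]
      generalize (l + 1) * (d * (8 * D + 8)) = Z at *
      generalize D * P = Z2 at *
      generalize l * P = Z3 at *
      omega) c hc0
    have e1 : l + (w + 8 * D + 7) * P + D * (P + 1) ≤ w * P + (10 * D + 8) * P := by
      have : l ≤ P := by omega
      nlinarith
    have e2 : d * (w * P) ≤ P * P := by
      rw [← mul_assoc]; exact Nat.mul_le_mul_right _ (by omega)
    calc d * A ≤ d * (w * P + (10 * D + 8) * P) := Nat.mul_le_mul_left _ (h.trans e1)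
      _ = d * (w * P) + d * 1 * (10 * D + 8) * P := by ring
      _ ≤ P * P + d * d * (20 * S + 20) * P := by
        refine add_le_add e2 (Nat.mul_le_mul_right _ (Nat.mul_le_mul (Nat.mul_le_mul_left _ hd) ?_))
        omega
  · have : P ≤ d * (9 * D + 8) := by
      rw [hPw]
      have : d * (w + 1) ≤ d * (9 * D + 8) := Nat.mul_le_mul_left _ (by omega)
      nlinarith
    calc d * A ≤ d * (P * P) := Nat.mul_le_mul_left _ hAq
      _ ≤ d * ((d * (9 * D + 8)) * P) := by gcongr
      _ = d * d * (9 * D + 8) * P := by ring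
      _ ≤ d * d * (20 * S + 20) * P := by gcongr <;> omega
      _ ≤ _ := Nat.le_add_left _ _


lemma pow_char_one {p : ℕ} [Fact p.Prime] {d k : ℕ} (hk : p - 1 = d * k)
    (ψ : MulChar (ZMod p) ℂ) (hψ : ψ ^ d = 1) (z : (ZMod p)ˣ) (hz : z ^ k = 1) : ψ z = 1 := by
  have hp : p.Prime := Fact.out
  obtain ⟨γ, hγ⟩ := IsCyclic.exists_generator (α := (ZMod p)ˣ)
  have ho : orderOf γ = p - 1 := by
    rw [orderOf_eq_card_of_forall_mem_zpowers hγ, Nat.card_eq_fintype_card, ZMod.card_units]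
  obtain ⟨i, hi⟩ := mem_powers_iff_mem_zpowers.2 (hγ z)
  simp only at hi
  have hk0 : 0 < k := by
    rcases Nat.eq_zero_or_pos k with h | h
    · subst h; have := hp.two_le; omega
    · exact h
  have : d ∣ i := by
    rw [← hi, ← pow_mul] at hz
    have := orderOf_dvd_of_pow_eq_one hz
    rw [ho, hk] at this
    exact Nat.dvd_of_mul_dvd_mul_right hk0 this
  obtain ⟨j, rfl⟩ := this
  rw [← hi, mul_comm, pow_mul, Units.val_pow_eq_pow_val, map_pow, ← MulChar.pow_apply_coe, hψ,
    MulChar.one_apply_coe]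

lemma sum_bound {ι F : Type*} [Fintype ι] [Field F] [Fintype F] {p : ℕ} [Fact p.Prime]
    [Algebra (ZMod p) F] (μ : ℕ) (hμ : 0 < μ) (hq : Fintype.card F = p ^ (μ + μ))
    {d : ℕ} (hdp : d ∣ p - 1) (ψ : MulChar (ZMod p) ℂ) (hψ : ψ ^ d = 1) (hψ1 : ψ ≠ 1)
    (t : ι → ZMod p) (ht : Function.Injective t) (ht0 : ∀ i, t i ≠ 0) (b : ι → ℕ)
    (hb0 : ∀ i, 0 < b i)
    (hb : ∀ n : ℕ, (∀ i, d ∣ n * b i) → d ∣ n) :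
    ‖∑ x : F, ψ (Algebra.norm (ZMod p) (∏ i, (1 + algebraMap (ZMod p) F (t i) * x) ^ b i))‖ ≤
      (2 * p * (d * d * (20 * (∑ i, b i) + 20)) + p * Fintype.card ι : ℕ) * (p : ℝ) ^ μ := by
  classical
  have hp : p.Prime := Fact.out
  have hp2 := hp.two_le
  obtain ⟨k, hk⟩ := hdp
  have hd : 0 < d := by
    rcases Nat.eq_zero_or_pos d with h | h
    · subst h; omega
    · exact h
  have hk0 : 0 < k := by
    rcases Nat.eq_zero_or_pos k with h | h
    · subst h; omega
    · exact h
  have hchar : CharP F p := charP_of_injective_algebraMap (algebraMap (ZMod p) F).injective p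
  let h : F → F := fun x => ∏ i, (1 + algebraMap (ZMod p) F (t i) * x) ^ b i
  obtain ⟨f, hf⟩ : p - 1 ∣ p ^ (μ + μ) - 1 := by simpa using Nat.sub_dvd_pow_sub_pow p 1 (μ + μ)
  have hqpos : 1 < p ^ (μ + μ) := Nat.one_lt_pow (by omega) hp.one_lt
  have hf0 : 0 < f := by
    rcases Nat.eq_zero_or_pos f with h | h
    · subst h; omega
    · exact h
  have hde : p ^ (μ + μ) = d * (k * f) + 1 := by
    rw [← mul_assoc, ← hk, ← hf]; omega
  have hnorm : ∀ z : F, algebraMap (ZMod p) F (Algebra.norm (ZMod p) z) = z ^ f := by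
    intro z
    rw [FiniteField.algebraMap_norm_eq_pow]
    congr 1
    rw [Nat.card_eq_fintype_card, Nat.card_eq_fintype_card, hq, ZMod.card, hf]
    exact Nat.mul_div_cancel_left _ (by omega)
  let A : (ZMod p)ˣ → ℕ := fun a =>
    (Finset.univ.filter fun x : F => (h x) ^ (k * f) = algebraMap (ZMod p) F (a ^ k : (ZMod p)ˣ)).card
  have hA : ∀ a, d * A a ≤ p ^ μ * p ^ μ + d * d * (20 * (∑ i, b i) + 20) * p ^ μ := by
    intro a
    refine stepanov p μ hq hd ⟨k, hk⟩ hde (fun i => algebraMap (ZMod p) F (t i))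
      ((algebraMap (ZMod p) F).injective.comp ht) (fun i => ?_) b hb _ ?_
    · simpa using ht0 i
    · simp
  let κ : ℕ := (Finset.univ.filter fun z : (ZMod p)ˣ => z ^ k = 1).card
  have hκ : κ = k := by
    have h1 := IsCyclic.card_powMonoidHom_ker (G := (ZMod p)ˣ) k
    rw [Nat.card_eq_fintype_card (α := (ZMod p)ˣ), ZMod.card_units, hk, Nat.gcd_mul_left_left] at h1
    rw [← h1, Nat.card_eq_fintype_card, Fintype.card_subtype]
    simp [κ, MonoidHom.mem_ker]
  -- fibre description
  have hfib : ∀ x, h x ≠ 0 → ∃ N : (ZMod p)ˣ, (N : ZMod p) = Algebra.norm (ZMod p) (h x) ∧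
      ∀ a : (ZMod p)ˣ, (h x) ^ (k * f) = algebraMap (ZMod p) F (a ^ k : (ZMod p)ˣ) ↔
        (a * N⁻¹) ^ k = 1 := by
    intro x hx
    have hN : Algebra.norm (ZMod p) (h x) ≠ 0 := by
      intro h0
      have := hnorm (h x)
      rw [h0, map_zero] at this
      exact hx (pow_eq_zero_iff hf0.ne' |>.1 this.symm)
    refine ⟨Units.mk0 _ hN, rfl, fun a => ?_⟩
    rw [mul_comm k f, pow_mul, ← hnorm, ← map_pow, (algebraMap (ZMod p) F).injective.eq_iff,
      mul_pow, inv_pow, mul_inv_eq_one, Units.ext_iff, Units.val_pow_eq_pow_val,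
      Units.val_pow_eq_pow_val, Units.val_mk0, eq_comm]
  have hfib0 : ∀ x, h x = 0 → ∀ a : (ZMod p)ˣ,
      ¬ ((h x) ^ (k * f) = algebraMap (ZMod p) F (a ^ k : (ZMod p)ˣ)) := by
    intro x hx a
    rw [hx, zero_pow (by positivity)]
    intro h0
    have h1 : algebraMap (ZMod p) F (a ^ k : (ZMod p)ˣ) ≠ 0 := by
      rw [Ne, map_eq_zero]
      exact Units.ne_zero _
    exact h1 h0.symm
  have hshift : ∀ N : (ZMod p)ˣ, ∀ g : (ZMod p)ˣ → ℂ,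
      ∑ a ∈ Finset.univ.filter (fun a : (ZMod p)ˣ => (a * N⁻¹) ^ k = 1), g a =
        ∑ z ∈ Finset.univ.filter (fun z : (ZMod p)ˣ => z ^ k = 1), g (z * N) := by
    intro N g
    refine Finset.sum_nbij' (fun a => a * N⁻¹) (fun z => z * N) ?_ ?_ ?_ ?_ ?_ <;> simp
  have hT : ∀ g : (ZMod p)ˣ → ℂ, ∑ a, g a * (A a : ℂ) =
      ∑ x : F, ∑ a ∈ Finset.univ.filter (fun a : (ZMod p)ˣ =>
        (h x) ^ (k * f) = algebraMap (ZMod p) F (a ^ k : (ZMod p)ˣ)), g a := by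
    intro g
    simp only [Finset.sum_filter]
    rw [Finset.sum_comm]
    refine Finset.sum_congr rfl fun a _ => ?_
    rw [← Finset.sum_filter, Finset.sum_const, nsmul_eq_mul, mul_comm]
  have hTψ : ∑ a : (ZMod p)ˣ, ψ a * (A a : ℂ) =
      k * ∑ x : F, ψ (Algebra.norm (ZMod p) (h x)) := by
    rw [hT, Finset.mul_sum]
    refine Finset.sum_congr rfl fun x _ => ?_
    by_cases hx : h x = 0
    · rw [Finset.filter_false_of_mem fun a _ => hfib0 x hx a, hx, Algebra.norm_zero, MulChar.map_zero]
      simp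
    · obtain ⟨N, hN, hN2⟩ := hfib x hx
      simp only [hN2]
      rw [hshift, ← hN]
      rw [Finset.sum_congr rfl (g := fun _ => ψ N)]
      · rw [Finset.sum_const, show (Finset.univ.filter fun z : (ZMod p)ˣ => z ^ k = 1).card = k
          from hκ, nsmul_eq_mul]
      · intro z hz
        rw [Units.val_mul, map_mul, pow_char_one hk ψ hψ z (Finset.mem_filter.1 hz).2, one_mul]
  have hT1 : ∑ a : (ZMod p)ˣ, A a = k * (Finset.univ.filter fun x : F => h x ≠ 0).card := by
    have h1 := hT (fun _ => 1)
    have h2 : ∀ x : F, ∑ a ∈ Finset.univ.filter (fun a : (ZMod p)ˣ =>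
        (h x) ^ (k * f) = algebraMap (ZMod p) F (a ^ k : (ZMod p)ˣ)), (1 : ℂ) =
        if h x ≠ 0 then (k : ℂ) else 0 := by
      intro x
      by_cases hx : h x = 0
      · rw [Finset.filter_false_of_mem fun a _ => hfib0 x hx a]
        simp [hx]
      · obtain ⟨N, hN, hN2⟩ := hfib x hx
        simp only [hN2]
        rw [hshift, Finset.sum_const, show (Finset.univ.filter fun z : (ZMod p)ˣ =>
          z ^ k = 1).card = k from hκ, nsmul_eq_mul]
        simp [hx]
    simp only [h2, one_mul] at h1
    rw [← Finset.sum_filter, Finset.sum_const, nsmul_eq_mul] at h1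
    rw [mul_comm]
    exact_mod_cast h1
  have hzeros : p ^ (μ + μ) ≤ (Finset.univ.filter fun x : F => h x ≠ 0).card + Fintype.card ι := by
    have h1 := Finset.card_filter_add_card_filter_not (s := (Finset.univ : Finset F)) (fun x => h x ≠ 0)
    rw [Finset.card_univ, hq] at h1
    have h2 : (Finset.univ.filter fun x : F => ¬ (h x ≠ 0)) ⊆
        Finset.univ.image (fun i => -(algebraMap (ZMod p) F (t i))⁻¹) := by
      intro x hx
      have hx := (Finset.mem_filter.1 hx).2
      simp only [ne_eq, not_not, h, Finset.prod_eq_zero_iff] at hx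
      obtain ⟨i, _, hi⟩ := hx
      have hi := pow_eq_zero_iff (hb0 i).ne' |>.1 hi
      refine Finset.mem_image.2 ⟨i, Finset.mem_univ _, ?_⟩
      have hti : algebraMap (ZMod p) F (t i) ≠ 0 := by simpa using ht0 i
      rw [neg_eq_iff_eq_neg, inv_eq_iff_eq_inv, eq_comm, inv_eq_iff_eq_inv]
      rw [eq_comm]
      apply inv_eq_of_mul_eq_one_right
      linear_combination -hi
    have h3 := (Finset.card_le_card h2).trans Finset.card_image_le
    rw [Finset.card_univ] at h3
    omega
  set C1 : ℕ := d * d * (20 * (∑ i, b i) + 20) with hC1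
  set Nn : ℕ := (Finset.univ.filter fun x : F => h x ≠ 0).card with hNn
  set S : ℂ := ∑ x : F, ψ (Algebra.norm (ZMod p) (h x)) with hS
  have hcardU : Fintype.card (ZMod p)ˣ = p - 1 := ZMod.card_units p
  have hψsum : ∑ a : (ZMod p)ˣ, ψ a = 0 := by
    have h1 := MulChar.sum_eq_zero_of_ne_one hψ1
    rw [← h1]
    rw [← Finset.sum_subset (Finset.subset_univ (Finset.univ.image (Units.val : (ZMod p)ˣ → ZMod p)))]
    · rw [Finset.sum_image]
      intro a _ b _ hab
      exact Units.ext hab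
    · intro x _ hx
      apply MulChar.map_nonunit
      rintro ⟨u, rfl⟩
      exact hx (Finset.mem_image_of_mem _ (Finset.mem_univ _))
  have hψn : ∀ a : (ZMod p)ˣ, ‖ψ a‖ ≤ 1 := by
    intro a
    have h1 : (ψ a) ^ d = 1 := by rw [← MulChar.pow_apply_coe, hψ, MulChar.one_apply_coe]
    exact (Complex.norm_eq_one_of_pow_eq_one h1 hd.ne').le
  let v : (ZMod p)ˣ → ℝ := fun a => (d : ℝ) * A a - (p : ℝ) ^ μ * (p : ℝ) ^ μ
  have hv : ∀ a, |v a| ≤ 2 * (C1 * (p : ℝ) ^ μ) - v a := by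
    intro a
    have h1 : (d : ℝ) * A a ≤ (p : ℝ) ^ μ * (p : ℝ) ^ μ + C1 * (p : ℝ) ^ μ := by
      exact_mod_cast hA a
    have h2 : (0 : ℝ) ≤ C1 * (p : ℝ) ^ μ := by positivity
    have h3 : v a ≤ C1 * (p : ℝ) ^ μ := by simp only [v]; linarith
    rw [abs_le]
    constructor <;> linarith
  have hp1 : ((p - 1 : ℕ) : ℝ) = d * k := by rw [hk]; push_cast; rfl
  have hsv : ∑ a, v a = (p - 1 : ℕ) * ((Nn : ℝ) - (p : ℝ) ^ μ * (p : ℝ) ^ μ) := by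
    simp only [v]
    rw [Finset.sum_sub_distrib, ← Finset.mul_sum, Finset.sum_const, Finset.card_univ, hcardU,
      nsmul_eq_mul]
    have h1 : ∑ a, (A a : ℝ) = k * Nn := by exact_mod_cast hT1
    rw [h1, hp1]; ring
  have hsabs : ∑ a, |v a| ≤ (p - 1 : ℕ) * (2 * (C1 * (p : ℝ) ^ μ) + Fintype.card ι) := by
    calc ∑ a, |v a| ≤ ∑ a, (2 * (C1 * (p : ℝ) ^ μ) - v a) := Finset.sum_le_sum fun a _ => hv a
      _ = (p - 1 : ℕ) * (2 * (C1 * (p : ℝ) ^ μ)) - ∑ a, v a := by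
        rw [Finset.sum_sub_distrib, Finset.sum_const, Finset.card_univ, hcardU, nsmul_eq_mul]
      _ ≤ _ := by
        rw [hsv]
        have h1 : (p : ℝ) ^ μ * (p : ℝ) ^ μ ≤ Nn + Fintype.card ι := by
          rw [← pow_add]; exact_mod_cast hzeros
        have h2 : (0 : ℝ) ≤ (p - 1 : ℕ) := Nat.cast_nonneg _
        nlinarith
  have hmain : ((p - 1 : ℕ) : ℂ) * S = ∑ a : (ZMod p)ˣ, ψ a * ((v a : ℝ) : ℂ) := by
    simp only [v]
    push_cast
    simp only [mul_sub]
    rw [Finset.sum_sub_distrib, ← Finset.sum_mul, hψsum, zero_mul, sub_zero]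
    have : ∀ a : (ZMod p)ˣ, ψ a * ((d : ℂ) * (A a : ℂ)) = d * (ψ a * (A a : ℂ)) := fun a => by ring
    simp only [this]
    rw [← Finset.mul_sum, hTψ, hk]
    push_cast; ring
  have hfin : ((p - 1 : ℕ) : ℝ) * ‖S‖ ≤
      (p - 1 : ℕ) * (2 * (C1 * (p : ℝ) ^ μ) + Fintype.card ι) := by
    refine le_trans ?_ hsabs
    have h1 : ((p - 1 : ℕ) : ℝ) * ‖S‖ = ‖((p - 1 : ℕ) : ℂ) * S‖ := by
      rw [norm_mul, Complex.norm_natCast]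
    rw [h1, hmain]
    refine (norm_sum_le _ _).trans (Finset.sum_le_sum fun a _ => ?_)
    rw [norm_mul, Complex.norm_real, Real.norm_eq_abs]
    exact mul_le_of_le_one_left (abs_nonneg _) (hψn a)
  have hpp : (0 : ℝ) < (p - 1 : ℕ) := by
    have : 0 < p - 1 := by omega
    exact_mod_cast this
  have hfin2 := le_of_mul_le_mul_left hfin hpp
  refine hfin2.trans ?_
  have hP : (1 : ℝ) ≤ (p : ℝ) ^ μ := one_le_pow₀ (by exact_mod_cast hp.one_lt.le)
  have hpr : (1 : ℝ) ≤ p := by exact_mod_cast hp.one_lt.le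
  push_cast
  have h1 : (0 : ℝ) ≤ C1 * (p : ℝ) ^ μ := by positivity
  have h2 : (Fintype.card ι : ℝ) ≤ p * Fintype.card ι * (p : ℝ) ^ μ := by
    have h3 : (1 : ℝ) ≤ p * (p : ℝ) ^ μ := by nlinarith
    have h4 : (0 : ℝ) ≤ Fintype.card ι := Nat.cast_nonneg _
    nlinarith
  nlinarith [mul_nonneg (sub_nonneg.2 hpr) h1]


lemma power_sum_bound {ι : Type*} [Fintype ι] (β : ι → ℂ) (R C : ℝ) (hR : 0 < R)
    (h : ∀ n : ℕ, 1 ≤ n → ‖∑ i, β i ^ n‖ ≤ C * R ^ n) (i : ι) : ‖β i‖ ≤ R := by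
  by_contra! hi
  have hu : ∀ j, ∃ u : Circle, β j = ‖β j‖ * (u : ℂ) := by
    intro j
    refine ⟨Circle.exp (Complex.arg (β j)), ?_⟩
    rw [Circle.coe_exp, Complex.norm_mul_exp_arg_mul_I]
  choose u hu using hu
  have hcl : MapClusterPt (1 : ι → Circle) Filter.atTop (fun n : ℕ => u ^ n) :=
    mapClusterPt_one_atTop_pow u
  have hnhds : {w : ι → Circle | ∀ j, 1 / 2 < ((w j : Circle) : ℂ).re} ∈ nhds (1 : ι → Circle) := by
    refine IsOpen.mem_nhds ?_ (by intro j; simp; norm_num)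
    rw [Set.ofPred_forall]
    refine isOpen_iInter_of_finite fun j => ?_
    refine isOpen_lt continuous_const ?_
    fun_prop
  have hfreq := hcl.frequently hnhds
  have hlim : Filter.Tendsto (fun n : ℕ => C * (R / ‖β i‖) ^ n) Filter.atTop (nhds (C * 0)) := by
    refine Filter.Tendsto.const_mul _ ?_
    refine tendsto_pow_atTop_nhds_zero_of_lt_one (by positivity) ?_
    rw [div_lt_one (hR.trans hi)]; exact hi
  rw [mul_zero] at hlim
  have hev := hlim.eventually (gt_mem_nhds (show (0 : ℝ) < 1 / 2 by norm_num))
  obtain ⟨n, hn1, hn2, hn3⟩ := (hfreq.and_eventually (hev.and (Filter.eventually_ge_atTop 1))).exists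
  have h1 := h n hn3
  have hpos : 0 < ‖β i‖ ^ n := pow_pos (hR.trans hi) n
  have h2 : ‖β i‖ ^ n * (1 / 2) ≤ ‖∑ i, β i ^ n‖ := by
    refine le_trans ?_ (Complex.re_le_norm _)
    rw [Complex.re_sum]
    have hre : ∀ j, ‖β j‖ ^ n * (1 / 2) ≤ (β j ^ n).re := by
      intro j
      have : β j ^ n = ((‖β j‖ ^ n : ℝ) : ℂ) * ((u j ^ n : Circle) : ℂ) := by
        conv_lhs => rw [hu j, mul_pow]
        rw [Circle.coe_pow, Complex.ofReal_pow]
      rw [this, Complex.re_ofReal_mul]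
      exact mul_le_mul_of_nonneg_left (hn1 j).le (by positivity)
    refine (hre i).trans ?_
    exact Finset.single_le_sum (f := fun j => (β j ^ n).re)
      (fun j _ => le_trans (by positivity) (hre j)) (Finset.mem_univ i)
  rw [div_pow, mul_div_assoc', div_lt_iff₀ hpos] at hn2
  linarith


lemma exists_roots_of_newton (m : ℕ) (c s : ℕ → ℂ) (hc0 : c 0 = 1) (hc : ∀ n, m < n → c n = 0)
    (hN : ∀ n : ℕ, (n : ℂ) * c n =
      ∑ a ∈ Finset.HasAntidiagonal.antidiagonal n with a.1 < n, c a.1 * s a.2) :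
    ∃ α : Fin m → ℂ, ∀ n, 1 ≤ n → s n = -∑ i, α i ^ n := by
  let Q : ℂ[X] := ∑ k ∈ Finset.range (m + 1), C (c (m - k)) * X ^ k
  have hQc : ∀ k, k ≤ m → Q.coeff k = c (m - k) := by
    intro k hk
    simp only [Q, finsetSum_coeff, coeff_C_mul_X_pow]
    rw [Finset.sum_ite_eq, if_pos (Finset.mem_range.2 (by omega))]
  have hQd : Q.natDegree = m := by
    apply natDegree_eq_of_le_of_coeff_ne_zero
    · refine natDegree_sum_le_of_forall_le _ _ fun k hk => ?_
      exact (natDegree_C_mul_X_pow_le _ _).trans (by have := Finset.mem_range.1 hk; omega)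
    · rw [hQc m le_rfl]; simp [hc0]
  have hQm : Q.Monic := by
    rw [Monic, leadingCoeff, hQd, hQc m le_rfl]; simp [hc0]
  have hcard : Multiset.card Q.roots = m := by
    rw [← (IsAlgClosed.splits Q).natDegree_eq_card_roots, hQd]
  obtain ⟨α, hα⟩ : ∃ α : Fin m → ℂ, Finset.univ.val.map α = Q.roots := by
    have hl : Q.roots.toList.length = m := by simpa using hcard
    refine ⟨fun i => Q.roots.toList.get (i.cast hl.symm), ?_⟩
    rw [Fin.univ_val_map]
    conv_rhs => rw [← Multiset.coe_toList Q.roots]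
    congr 1
    apply List.ext_get <;> simp [hcard]
  have he : ∀ k, MvPolynomial.aeval α (MvPolynomial.esymm (Fin m) ℂ k) = (-1) ^ k * c k := by
    intro k
    rw [MvPolynomial.aeval_esymm_eq_multiset_esymm, hα]
    by_cases hk : k ≤ m
    · have h1 := Polynomial.coeff_eq_esymm_roots_of_card (p := Q) (by rw [hcard, hQd])
        (k := m - k) (by omega)
      rw [hQc _ (by omega), hQd, hQm.leadingCoeff, Nat.sub_sub_self hk, one_mul] at h1
      rw [h1, ← mul_assoc, ← mul_pow]; simp
    · rw [hc k (by omega), mul_zero, Multiset.esymm, Multiset.powersetCard_eq_empty _ (by omega)]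
      simp
  have hP : ∀ n : ℕ, (n : ℂ) * c n =
      ∑ a ∈ Finset.HasAntidiagonal.antidiagonal n with a.1 < n, c a.1 * (-∑ i, α i ^ a.2) := by
    intro n
    have h1 := congrArg (MvPolynomial.aeval α) (MvPolynomial.mul_esymm_eq_sum (Fin m) ℂ n)
    simp only [map_mul, map_natCast, he, map_sum, map_pow, map_neg, map_one, MvPolynomial.psum,
      MvPolynomial.aeval_X] at h1
    have h2 : ∀ j : ℕ, ((-1 : ℂ) ^ j) * (-1) ^ j = 1 := fun j => by rw [← mul_pow]; simp
    have h3 := congrArg (fun z => (-1 : ℂ) ^ n * z) h1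
    calc (n : ℂ) * c n = (-1) ^ n * (n * ((-1) ^ n * c n)) := by linear_combination -(n * c n) * h2 n
      _ = _ := h3
      _ = _ := by
        rw [pow_succ, ← mul_assoc, ← mul_assoc, h2, one_mul, Finset.mul_sum]
        refine Finset.sum_congr rfl fun a _ => ?_
        rw [← mul_assoc ((-1) ^ a.1), h2]; ring
  refine ⟨α, fun n => ?_⟩
  induction n using Nat.strong_induction_on with
  | _ n ih =>
    intro hn
    have h := (hN n).symm.trans (hP n)
    rw [← sub_eq_zero, ← Finset.sum_sub_distrib, Finset.sum_eq_single (0, n)] at h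
    · simp only [hc0, one_mul] at h
      exact sub_eq_zero.1 h
    · rintro ⟨i, j⟩ hij hne
      simp only [Finset.mem_filter, Finset.HasAntidiagonal.mem_antidiagonal] at hij
      have hi : i ≠ 0 := by
        rintro rfl
        apply hne; simp at hij; simp [hij.1]
      simp only
      rw [ih j (by omega) (by omega), sub_self]
    · intro h0
      exfalso; apply h0; simp; omega


lemma finite_monics (K : Type*) [Field K] [Fintype K] (n : ℕ) :
    {g : K[X] | g.Monic ∧ g.natDegree = n}.Finite := by
  refine Set.Finite.of_injOn (f := fun g (i : Fin (n + 1)) => g.coeff i) (t := Set.univ)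
    (fun _ _ => Set.mem_univ _) ?_ Set.finite_univ
  rintro g ⟨_, hg⟩ h ⟨_, hh⟩ hgh
  ext i
  by_cases hi : i < n + 1
  · exact congrFun hgh ⟨i, hi⟩
  · rw [coeff_eq_zero_of_natDegree_lt (by omega), coeff_eq_zero_of_natDegree_lt (by omega)]

noncomputable def monics (K : Type*) [Field K] [Fintype K] (n : ℕ) : Finset K[X] :=
  (finite_monics K n).toFinset

lemma mem_monics {K : Type*} [Field K] [Fintype K] {n : ℕ} {g : K[X]} :
    g ∈ monics K n ↔ g.Monic ∧ g.natDegree = n := by simp [monics]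

open Classical in
noncomputable def irreds (K : Type*) [Field K] [Fintype K] (n : ℕ) : Finset K[X] :=
  (monics K n).filter Irreducible

lemma mem_irreds {K : Type*} [Field K] [Fintype K] {n : ℕ} {g : K[X]} :
    g ∈ irreds K n ↔ g.Monic ∧ g.natDegree = n ∧ Irreducible g := by
  simp [irreds, mem_monics, and_assoc]

open Classical in
lemma count_pow_dvd {K : Type*} [Field K] {π g : K[X]} (hπ : Irreducible π) (hπm : π.Monic)
    (hg : g.Monic) {n : ℕ} (hn : g.natDegree = n) :
    ((Finset.Icc 1 n).filter fun a => π ^ a ∣ g).card =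
      (UniqueFactorizationMonoid.normalizedFactors g).count π := by
  have h := UniqueFactorizationMonoid.emultiplicity_eq_count_normalizedFactors hπ hg.ne_zero
  rw [hπm.normalize_eq_self] at h
  have h1 : ∀ a : ℕ, π ^ a ∣ g ↔ a ≤ (UniqueFactorizationMonoid.normalizedFactors g).count π := by
    intro a
    rw [pow_dvd_iff_le_emultiplicity, h]; simp
  have h2 : (UniqueFactorizationMonoid.normalizedFactors g).count π ≤ n := by
    have h3 := natDegree_le_of_dvd ((h1 _).2 le_rfl) hg.ne_zero
    rw [natDegree_pow, hn] at h3
    have := hπ.natDegree_pos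
    exact le_trans (Nat.le_mul_of_pos_right _ this) h3
  have h4 : (Finset.Icc 1 n).filter (fun a => π ^ a ∣ g) =
      Finset.Icc 1 ((UniqueFactorizationMonoid.normalizedFactors g).count π) := by
    ext a
    simp only [Finset.mem_filter, Finset.mem_Icc, h1]
    omega
  rw [h4]; simp

open Classical in
lemma degree_eq_sum {K : Type*} [Field K] [Fintype K] {g : K[X]} {n : ℕ} (hg : g ∈ monics K n) :
    n = ∑ k ∈ Finset.Icc 1 n, ∑ π ∈ irreds K k, ∑ a ∈ Finset.Icc 1 n,
      if π ^ a ∣ g then k else 0 := by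
  obtain ⟨hgm, hgn⟩ := mem_monics.1 hg
  set N := UniqueFactorizationMonoid.normalizedFactors g with hN
  have hmem : ∀ π ∈ N, π.Monic ∧ Irreducible π ∧ π.natDegree ∈ Finset.Icc 1 n := by
    intro π hπ
    have hirr := UniqueFactorizationMonoid.irreducible_of_normalized_factor π hπ
    refine ⟨?_, hirr, ?_⟩
    · rw [← UniqueFactorizationMonoid.normalize_normalized_factor π hπ]
      exact monic_normalize hirr.ne_zero
    · have := natDegree_le_of_dvd (UniqueFactorizationMonoid.dvd_of_mem_normalizedFactors hπ)
        hgm.ne_zero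
      have := hirr.natDegree_pos
      rw [Finset.mem_Icc]; omega
  have hprod : N.prod = g := by
    have h1 := UniqueFactorizationMonoid.prod_normalizedFactors hgm.ne_zero
    refine eq_of_monic_of_associated ?_ hgm h1
    simpa using monic_multiset_prod_of_monic N id (fun π hπ => (hmem π hπ).1)
  have hdeg : n = ∑ π ∈ N.toFinset, N.count π * π.natDegree := by
    rw [← hgn]
    conv_lhs => rw [← hprod]
    rw [natDegree_multiset_prod_of_monic _ (fun π hπ => (hmem π hπ).1), Finset.sum_multiset_map_count]
    simp
  conv_lhs => rw [hdeg]
  rw [← Finset.sum_fiberwise_of_maps_to (t := Finset.Icc 1 n) (g := natDegree)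
    (fun π hπ => (hmem π (Multiset.mem_toFinset.1 hπ)).2.2)]
  refine Finset.sum_congr rfl fun k hk => ?_
  have hin : ∀ π ∈ irreds K k, (∑ a ∈ Finset.Icc 1 n, if π ^ a ∣ g then k else 0) =
      N.count π * π.natDegree := by
    intro π hπ
    obtain ⟨h1, h2, h3⟩ := mem_irreds.1 hπ
    rw [← Finset.sum_filter, Finset.sum_const, count_pow_dvd h3 h1 hgm hgn, h2, smul_eq_mul]
  rw [Finset.sum_congr rfl hin]
  refine Finset.sum_subset ?_ ?_
  · intro π hπ
    rw [Finset.mem_filter, Multiset.mem_toFinset] at hπ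
    exact mem_irreds.2 ⟨(hmem π hπ.1).1, hπ.2, (hmem π hπ.1).2.1⟩
  · intro π hπ hπ2
    have : π ∉ N := by
      intro h
      exact hπ2 (Finset.mem_filter.2 ⟨Multiset.mem_toFinset.2 h, (mem_irreds.1 hπ).2.1⟩)
    rw [Multiset.count_eq_zero_of_notMem this, zero_mul]

open Classical in
lemma sum_dvd {K : Type*} [Field K] [Fintype K] (χ : K[X] → ℂ)
    (hχ : ∀ f g : K[X], f.Monic → g.Monic → χ (f * g) = χ f * χ g)
    {f : K[X]} (hf : f.Monic) {m n : ℕ} (hm : f.natDegree = m) (hmn : m ≤ n) :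
    ∑ g ∈ monics K n with f ∣ g, χ g = χ f * ∑ g ∈ monics K (n - m), χ g := by
  rw [Finset.mul_sum]
  symm
  refine Finset.sum_bij (fun g _ => f * g) ?_ ?_ ?_ ?_
  · intro g hg
    obtain ⟨h1, h2⟩ := mem_monics.1 hg
    rw [Finset.mem_filter, mem_monics, hf.natDegree_mul h1]
    exact ⟨⟨hf.mul h1, by omega⟩, dvd_mul_right _ _⟩
  · intro g _ h _ hgh
    exact mul_left_cancel₀ hf.ne_zero hgh
  · intro g hg
    rw [Finset.mem_filter, mem_monics] at hg
    obtain ⟨⟨h1, h2⟩, u, rfl⟩ := hg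
    have hu : u.Monic := hf.of_mul_monic_left h1
    rw [hf.natDegree_mul hu] at h2
    exact ⟨u, mem_monics.2 ⟨hu, by omega⟩, rfl⟩
  · intro g hg
    exact (hχ f g hf (mem_monics.1 hg).1).symm

noncomputable def sSum {K : Type*} [Field K] [Fintype K] (χ : K[X] → ℂ) (n : ℕ) : ℂ :=
  ∑ k ∈ n.divisors, ∑ π ∈ irreds K k, (k : ℂ) * χ π ^ (n / k)

lemma newton_monics {K : Type*} [Field K] [Fintype K] (χ : K[X] → ℂ) (h1 : χ 1 = 1)
    (hχ : ∀ f g : K[X], f.Monic → g.Monic → χ (f * g) = χ f * χ g) (n : ℕ) :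
    (n : ℂ) * ∑ g ∈ monics K n, χ g =
      ∑ a ∈ Finset.HasAntidiagonal.antidiagonal n with a.1 < n,
        (∑ g ∈ monics K a.1, χ g) * sSum χ a.2 := by
  classical
  have hpow : ∀ f : K[X], f.Monic → ∀ a : ℕ, χ (f ^ a) = χ f ^ a := by
    intro f hf a
    induction a with
    | zero => simpa using h1
    | succ a ih => rw [pow_succ, hχ _ _ (hf.pow a) hf, ih, pow_succ]
  have hA : (n : ℂ) * ∑ g ∈ monics K n, χ g = ∑ k ∈ Finset.Icc 1 n, ∑ π ∈ irreds K k,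
      ∑ a ∈ Finset.Icc 1 n, if k * a ≤ n then
        (k : ℂ) * χ π ^ a * ∑ g ∈ monics K (n - k * a), χ g else 0 := by
    calc (n : ℂ) * ∑ g ∈ monics K n, χ g = ∑ g ∈ monics K n, ∑ k ∈ Finset.Icc 1 n,
          ∑ π ∈ irreds K k, ∑ a ∈ Finset.Icc 1 n, (if π ^ a ∣ g then (k : ℂ) * χ g else 0) := by
          rw [Finset.mul_sum]
          refine Finset.sum_congr rfl fun g hg => ?_
          have := congrArg (fun z : ℕ => (z : ℂ)) (degree_eq_sum hg)
          conv_lhs => rw [this]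
          push_cast
          simp only [Finset.sum_mul, ite_mul, zero_mul]
      _ = ∑ k ∈ Finset.Icc 1 n, ∑ π ∈ irreds K k, ∑ a ∈ Finset.Icc 1 n, ∑ g ∈ monics K n,
          (if π ^ a ∣ g then (k : ℂ) * χ g else 0) := by
          rw [Finset.sum_comm]
          refine Finset.sum_congr rfl fun k _ => ?_
          rw [Finset.sum_comm]
          refine Finset.sum_congr rfl fun π _ => ?_
          rw [Finset.sum_comm]
      _ = _ := by
          refine Finset.sum_congr rfl fun k _ => ?_
          refine Finset.sum_congr rfl fun π hπ => ?_
          refine Finset.sum_congr rfl fun a _ => ?_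
          obtain ⟨hm, hd, hi⟩ := mem_irreds.1 hπ
          have hda : (π ^ a).natDegree = k * a := by rw [natDegree_pow, hd, mul_comm]
          rw [← Finset.sum_filter]
          split_ifs with hka
          · rw [← Finset.mul_sum, sum_dvd χ hχ (hm.pow a) hda hka, hpow π hm, mul_assoc]
          · rw [Finset.filter_false_of_mem, Finset.sum_empty]
            intro g hg hdv
            obtain ⟨g1, g2⟩ := mem_monics.1 hg
            have := natDegree_le_of_dvd hdv g1.ne_zero
            omega
  rw [hA]
  have hB : ∑ a ∈ Finset.HasAntidiagonal.antidiagonal n with a.1 < n,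
        (∑ g ∈ monics K a.1, χ g) * sSum χ a.2 =
      ∑ j ∈ Finset.Icc 1 n, (∑ g ∈ monics K (n - j), χ g) * sSum χ j := by
    symm
    refine Finset.sum_bij (fun j _ => (n - j, j)) ?_ ?_ ?_ ?_
    · intro j hj
      rw [Finset.mem_Icc] at hj
      rw [Finset.mem_filter, Finset.HasAntidiagonal.mem_antidiagonal]
      constructor
      · simp only; omega
      · simp only; omega
    · intro i _ j _ h
      exact (Prod.mk.inj h).2
    · rintro ⟨i, j⟩ hij
      rw [Finset.mem_filter, Finset.HasAntidiagonal.mem_antidiagonal] at hij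
      simp only at hij
      exact ⟨j, Finset.mem_Icc.2 (by omega), Prod.ext (by simp only; omega) rfl⟩
    · intro j _; rfl
  rw [hB]
  have hC : ∀ k ∈ Finset.Icc 1 n, ∀ G : ℕ → ℕ → ℂ,
      (∑ a ∈ Finset.Icc 1 n, if k * a ≤ n then G a (k * a) else 0) =
      ∑ j ∈ Finset.Icc 1 n, if k ∣ j then G (j / k) j else 0 := by
    intro k hk G
    rw [Finset.mem_Icc] at hk
    rw [← Finset.sum_filter, ← Finset.sum_filter]
    refine Finset.sum_bij (fun a _ => k * a) ?_ ?_ ?_ ?_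
    · intro a ha
      rw [Finset.mem_filter, Finset.mem_Icc] at ha ⊢
      exact ⟨⟨Nat.mul_pos (by omega) (by omega), ha.2⟩, dvd_mul_right _ _⟩
    · intro a _ b _ h
      exact Nat.eq_of_mul_eq_mul_left (by omega) h
    · intro j hj
      rw [Finset.mem_filter, Finset.mem_Icc] at hj
      obtain ⟨⟨hj1, hj2⟩, a, rfl⟩ := hj
      refine ⟨a, ?_, rfl⟩
      rw [Finset.mem_filter, Finset.mem_Icc]
      refine ⟨⟨?_, ?_⟩, hj2⟩
      · rcases Nat.eq_zero_or_pos a with h | h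
        · subst h; simp at hj1
        · exact h
      · exact le_trans (Nat.le_mul_of_pos_left _ (by omega)) hj2
    · intro a _
      rw [Nat.mul_div_cancel_left _ (by omega)]
  calc _ = ∑ k ∈ Finset.Icc 1 n, ∑ π ∈ irreds K k, ∑ j ∈ Finset.Icc 1 n,
        if k ∣ j then (k : ℂ) * χ π ^ (j / k) * ∑ g ∈ monics K (n - j), χ g else 0 := by
        refine Finset.sum_congr rfl fun k hk => Finset.sum_congr rfl fun π _ => ?_
        exact hC k hk (fun a m => (k : ℂ) * χ π ^ a * ∑ g ∈ monics K (n - m), χ g)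
    _ = ∑ j ∈ Finset.Icc 1 n, ∑ k ∈ Finset.Icc 1 n, ∑ π ∈ irreds K k,
        if k ∣ j then (k : ℂ) * χ π ^ (j / k) * ∑ g ∈ monics K (n - j), χ g else 0 := by
        rw [Finset.sum_comm]
        refine Finset.sum_congr rfl fun k _ => ?_
        rw [Finset.sum_comm]
    _ = _ := by
        refine Finset.sum_congr rfl fun j hj => ?_
        rw [Finset.mem_Icc] at hj
        have hdiv : j.divisors = (Finset.Icc 1 n).filter (fun k => k ∣ j) := by
          ext k
          rw [Nat.mem_divisors, Finset.mem_filter, Finset.mem_Icc]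
          constructor
          · rintro ⟨h, h0⟩
            exact ⟨⟨Nat.pos_of_dvd_of_pos h (by omega), (Nat.le_of_dvd (by omega) h).trans hj.2⟩, h⟩
          · rintro ⟨_, h⟩
            exact ⟨h, by omega⟩
        rw [sSum, hdiv, Finset.sum_filter, mul_comm, Finset.sum_mul]
        refine Finset.sum_congr rfl fun k _ => ?_
        split_ifs
        · rw [Finset.sum_mul]
        · simp


lemma norm_one_add {K F : Type*} [Field K] [Field F] [Algebra K F] [FiniteDimensional K F]
    {t : K} (ht : t ≠ 0) (x : F) :
    Algebra.norm K (1 + algebraMap K F t * x) =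
      ((-t) ^ (minpoly K x).natDegree * (minpoly K x).eval (-t⁻¹)) ^
        (Module.finrank K F / (minpoly K x).natDegree) := by
  have hx : IsIntegral K x := Algebra.IsIntegral.isIntegral x
  set k := (minpoly K x).natDegree with hk
  have hk0 : 0 < k := minpoly.natDegree_pos hx
  have hkn : k ∣ Module.finrank K F := minpoly.degree_dvd hx
  obtain ⟨m, hm⟩ := hkn
  have hy : ∀ y : F, (minpoly K y).natDegree = k →
      Algebra.norm K y = ((-1) ^ k * (minpoly K y).coeff 0) ^ m := by
    intro y hyk
    have hyi : IsIntegral K y := Algebra.IsIntegral.isIntegral y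
    rw [Algebra.norm_eq_norm_adjoin]
    have h1 := Algebra.PowerBasis.norm_gen_eq_coeff_zero_minpoly
      (IntermediateField.adjoin.powerBasis hyi)
    rw [IntermediateField.adjoin.powerBasis_gen, IntermediateField.minpoly_gen,
      IntermediateField.adjoin.powerBasis_dim, hyk] at h1
    rw [h1]
    congr 1
    have h2 := Module.finrank_mul_finrank K (IntermediateField.adjoin K {y}) F
    rw [IntermediateField.adjoin.finrank hyi, hyk, hm] at h2
    exact Nat.eq_of_mul_eq_mul_left hk0 h2
  have h1 : (1 + algebraMap K F t * x) = algebraMap K F t * (x + algebraMap K F t⁻¹) := by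
    rw [mul_add, ← map_mul, mul_inv_cancel₀ ht, map_one, add_comm]
  have h2 := minpoly.add_algebraMap (A := K) x t⁻¹
  rw [h1, map_mul, Algebra.norm_algebraMap, hy _ (by rw [h2, natDegree_comp]; simp [hk]), h2,
    coeff_zero_eq_eval_zero, eval_comp, hm, Nat.mul_div_cancel_left _ hk0, pow_mul, ← mul_pow,
    ← mul_assoc, ← mul_pow]
  simp

lemma card_minpoly_eq {K F : Type*} [Field K] [Fintype K] [Field F] [Fintype F] [Algebra K F]
    [DecidableEq F] [DecidableEq K[X]]
    {k : ℕ} (hk : k ∣ Module.finrank K F) {π : K[X]} (hπ : π ∈ irreds K k) :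
    (Finset.univ.filter fun x : F => minpoly K x = π).card = k := by
  obtain ⟨hm, hd, hi⟩ := mem_irreds.1 hπ
  have hdv : π ∣ X ^ (Nat.card K) ^ (Module.finrank K F) - X :=
    (hi.natDegree_dvd_iff_dvd_X_pow_card_pow_sub_X).1 (hd ▸ hk)
  have hcard : Nat.card K ^ Module.finrank K F = Nat.card F :=
    (Module.natCard_eq_pow_finrank (K := K) (V := F)).symm
  rw [hcard] at hdv
  have hsplit : Splits (π.map (algebraMap K F)) := by
    refine Splits.of_dvd (Polynomial.splits_X_pow_nat_card_sub_X (K := F)) ?_ ?_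
    · exact FiniteField.X_pow_card_sub_X_ne_zero F (by
        rw [Nat.card_eq_fintype_card]; exact Fintype.one_lt_card)
    · simpa using Polynomial.map_dvd (algebraMap K F) hdv
  have hsep : π.Separable := PerfectField.separable_of_irreducible hi
  have h1 := card_rootSet_eq_natDegree hsep hsplit
  rw [hd] at h1
  rw [← h1, ← Set.toFinset_card]
  congr 1
  ext x
  rw [Finset.mem_filter, Set.mem_toFinset, mem_rootSet]
  constructor
  · rintro ⟨_, rfl⟩
    exact ⟨hm.ne_zero, minpoly.aeval _ _⟩
  · rintro ⟨_, h⟩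
    exact ⟨Finset.mem_univ _, (minpoly.eq_of_irreducible_of_monic hi h hm).symm⟩

noncomputable def chiP {K ι : Type*} [Field K] [Fintype ι] (ψ : MulChar K ℂ)
    (t : ι → K) (b : ι → ℕ) (g : K[X]) : ℂ :=
  ψ (∏ i, ((-t i) ^ g.natDegree * g.eval (-(t i)⁻¹)) ^ b i)

lemma sum_eq_sSum {K F ι : Type*} [Field K] [Fintype K] [Field F] [Fintype F] [Algebra K F]
    [Fintype ι] (ψ : MulChar K ℂ) (t : ι → K) (ht : ∀ i, t i ≠ 0) (b : ι → ℕ) :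
    ∑ x : F, ψ (Algebra.norm K (∏ i, (1 + algebraMap K F (t i) * x) ^ b i)) =
      sSum (chiP ψ t b) (Module.finrank K F) := by
  classical
  have h1 : ∀ x : F, ψ (Algebra.norm K (∏ i, (1 + algebraMap K F (t i) * x) ^ b i)) =
      chiP ψ t b (minpoly K x) ^ (Module.finrank K F / (minpoly K x).natDegree) := by
    intro x
    rw [chiP, ← map_pow, ← Finset.prod_pow, map_prod]
    congr 1
    refine Finset.prod_congr rfl fun i _ => ?_
    rw [map_pow, norm_one_add (ht i), ← pow_mul, ← pow_mul, mul_comm (b i)]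
  have hmem : ∀ x : F, minpoly K x ∈ irreds K (minpoly K x).natDegree := fun x =>
    have hx : IsIntegral K x := Algebra.IsIntegral.isIntegral x
    mem_irreds.2 ⟨minpoly.monic hx, rfl, minpoly.irreducible hx⟩
  have hdvd : ∀ x : F, (minpoly K x).natDegree ∣ Module.finrank K F := fun x =>
    minpoly.degree_dvd (Algebra.IsIntegral.isIntegral x)
  simp only [h1]
  rw [sSum, ← Finset.sum_fiberwise_of_maps_to (t := (Module.finrank K F).divisors)
    (g := fun x : F => (minpoly K x).natDegree)
    (fun x _ => Nat.mem_divisors.2 ⟨hdvd x, Module.finrank_pos.ne'⟩)]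
  refine Finset.sum_congr rfl fun k hk => ?_
  rw [← Finset.sum_fiberwise_of_maps_to (t := irreds K k) (g := fun x : F => minpoly K x)
    (s := Finset.univ.filter fun x : F => (minpoly K x).natDegree = k)
    (fun x hx => by
      have h := hmem x
      rw [(Finset.mem_filter.1 hx).2] at h
      exact h)]
  refine Finset.sum_congr rfl fun π hπ => ?_
  rw [Finset.filter_filter]
  obtain ⟨hm, hd, hi⟩ := mem_irreds.1 hπ
  have h2 : (Finset.univ.filter fun x : F => (minpoly K x).natDegree = k ∧ minpoly K x = π) =
      Finset.univ.filter fun x : F => minpoly K x = π := by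
    ext x
    simp only [Finset.mem_filter, Finset.mem_univ, true_and]
    exact ⟨fun h => h.2, fun h => ⟨h ▸ hd, h⟩⟩
  rw [h2, Finset.sum_congr rfl (g := fun _ => chiP ψ t b π ^ (Module.finrank K F / k)),
    Finset.sum_const, card_minpoly_eq (Nat.dvd_of_mem_divisors hk) hπ, nsmul_eq_mul]
  intro x hx
  rw [(Finset.mem_filter.1 hx).2, hd]

lemma chiP_one {K ι : Type*} [Field K] [Fintype ι] (ψ : MulChar K ℂ)
    (t : ι → K) (b : ι → ℕ) : chiP ψ t b 1 = 1 := by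
  simp [chiP]

lemma chiP_mul {K ι : Type*} [Field K] [Fintype ι] (ψ : MulChar K ℂ)
    (t : ι → K) (b : ι → ℕ) (f g : K[X]) (hf : f.Monic) (hg : g.Monic) :
    chiP ψ t b (f * g) = chiP ψ t b f * chiP ψ t b g := by
  rw [chiP, chiP, chiP, ← map_mul, ← Finset.prod_mul_distrib]
  congr 1
  refine Finset.prod_congr rfl fun i _ => ?_
  rw [hf.natDegree_mul hg, eval_mul, ← mul_pow, pow_add]
  congr 1
  ring

lemma sum_monics_zero {K ι : Type*} [Field K] [Fintype K] [Fintype ι] (ψ : MulChar K ℂ)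
    (t : ι → K) (ht : Function.Injective t) (ht0 : ∀ i, t i ≠ 0) (b : ι → ℕ)
    (i₀ : ι) (hb0 : ψ ^ b i₀ ≠ 1) {n : ℕ} (hn : Fintype.card ι ≤ n) :
    ∑ g ∈ monics K n, chiP ψ t b g = 0 := by
  classical
  obtain ⟨u, hu⟩ : ∃ u : Kˣ, (ψ ^ b i₀) u ≠ 1 := by
    by_contra! h
    exact hb0 (MulChar.ext fun a => by rw [h a, MulChar.one_apply_coe])
  rw [MulChar.pow_apply_coe] at hu
  have hθ : Function.Injective fun i => -(t i)⁻¹ := by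
    intro i j h
    simp only [neg_inj, inv_inj] at h
    exact ht h
  let ℓ : K[X] := Lagrange.basis Finset.univ (fun i => -(t i)⁻¹) i₀
  have hℓ0 : ℓ.eval (-(t i₀)⁻¹) = 1 :=
    Lagrange.eval_basis_self hθ.injOn (Finset.mem_univ _)
  have hℓ1 : ∀ i, i ≠ i₀ → ℓ.eval (-(t i)⁻¹) = 0 := fun i hi =>
    Lagrange.eval_basis_of_ne (v := fun i => -(t i)⁻¹) hi.symm (Finset.mem_univ _)
  have hℓd : ℓ.degree < n := by
    have := Lagrange.degree_basis (s := Finset.univ) (v := fun i => -(t i)⁻¹) hθ.injOn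
      (Finset.mem_univ i₀)
    have hpos : 0 < Fintype.card ι := Fintype.card_pos_iff.2 ⟨i₀⟩
    rw [this, Finset.card_univ]
    exact_mod_cast (by omega : Fintype.card ι - 1 < n)
  let T : K → K[X] → K[X] := fun v g => g + C ((v - 1) * g.eval (-(t i₀)⁻¹)) * ℓ
  have hTmem : ∀ v, ∀ g ∈ monics K n, T v g ∈ monics K n := by
    intro v g hg
    obtain ⟨h1, h2⟩ := mem_monics.1 hg
    have hd : (C ((v - 1) * g.eval (-(t i₀)⁻¹)) * ℓ).degree < g.degree := by
      rw [degree_eq_natDegree h1.ne_zero, h2]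
      refine lt_of_le_of_lt ?_ hℓd
      rw [← smul_eq_C_mul]
      exact degree_smul_le _ _
    refine mem_monics.2 ⟨h1.add_of_left hd, ?_⟩
    rw [natDegree_add_eq_left_of_degree_lt hd, h2]
  have hTev : ∀ v g, (T v g).eval (-(t i₀)⁻¹) = v * g.eval (-(t i₀)⁻¹) := by
    intro v g
    simp only [T, eval_add, eval_mul, eval_C, hℓ0]; ring
  have hTev' : ∀ v g i, i ≠ i₀ → (T v g).eval (-(t i)⁻¹) = g.eval (-(t i)⁻¹) := by
    intro v g i hi
    simp only [T, eval_add, eval_mul, eval_C, hℓ1 i hi]; ring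
  have hTT : ∀ v w g, v * w = 1 → T v (T w g) = g := by
    intro v w g hvw
    have h1 := hTev w g
    have h2 : T v (T w g) = T w g + C ((v - 1) * (T w g).eval (-(t i₀)⁻¹)) * ℓ := rfl
    have h3 : (v - 1) * (w * g.eval (-(t i₀)⁻¹)) = -((w - 1) * g.eval (-(t i₀)⁻¹)) := by
      linear_combination g.eval (-(t i₀)⁻¹) * hvw
    rw [h2, h1, h3]
    simp only [T, C_neg]
    ring
  have hχT : ∀ g ∈ monics K n, chiP ψ t b (T u g) = ψ u ^ b i₀ * chiP ψ t b g := by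
    intro g hg
    have h1 := (mem_monics.1 hg).2
    have h2 := (mem_monics.1 (hTmem u g hg)).2
    rw [chiP, chiP, h1, h2, ← map_pow, ← map_mul]
    congr 1
    rw [← Finset.mul_prod_erase _ _ (Finset.mem_univ i₀), ← Finset.mul_prod_erase _ _ (Finset.mem_univ i₀),
      hTev, ← mul_assoc ((u : K) ^ b i₀), ← mul_pow]
    congr 1
    · ring
    · refine Finset.prod_congr rfl fun i hi => ?_
      rw [hTev' _ _ _ (Finset.ne_of_mem_erase hi)]
  have hsum : ∑ g ∈ monics K n, chiP ψ t b g = ψ u ^ b i₀ * ∑ g ∈ monics K n, chiP ψ t b g := by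
    rw [Finset.mul_sum]
    symm
    refine Finset.sum_nbij' (fun g => T u g) (fun g => T ((u⁻¹ : Kˣ) : K) g) (hTmem _) (hTmem _) ?_ ?_ ?_
    · intro g _
      exact hTT _ _ _ (by simp)
    · intro g _
      exact hTT _ _ _ (by simp)
    · intro g hg
      exact (hχT g hg).symm
  have h3 : (ψ u ^ b i₀ - 1) * ∑ g ∈ monics K n, chiP ψ t b g = 0 := by
    linear_combination -hsum
  rcases mul_eq_zero.1 h3 with h | h
  · exact absurd (sub_eq_zero.1 h) hu
  · exact h


lemma weil_core {ι : Type*} [Fintype ι] {p : ℕ} [Fact p.Prime] {d : ℕ} (hd1 : 1 < d)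
    (hdp : d ∣ p - 1) (ψ : MulChar (ZMod p) ℂ) (hψ : orderOf ψ = d)
    (t : ι → ZMod p) (ht : Function.Injective t) (ht0 : ∀ i, t i ≠ 0) (b : ι → ℕ)
    (hb0 : ∀ i, 0 < b i) (hb : ∀ n : ℕ, (∀ i, d ∣ n * b i) → d ∣ n) :
    ‖∑ x : ZMod p, ψ (∏ i, (1 + t i * x) ^ b i)‖ ≤ ((Fintype.card ι - 1 : ℕ) : ℝ) * Real.sqrt p := by
  have hp : p.Prime := Fact.out
  have hψd : ψ ^ d = 1 := hψ ▸ pow_orderOf_eq_one ψ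
  have hψ1 : ψ ≠ 1 := by
    rintro rfl
    rw [orderOf_one] at hψ; omega
  obtain ⟨i₀, hi₀⟩ : ∃ i₀, ψ ^ b i₀ ≠ 1 := by
    by_contra! h
    have : d ∣ 1 := hb 1 fun i => by
      rw [one_mul, ← hψ]; exact orderOf_dvd_of_pow_eq_one (h i)
    have := Nat.le_of_dvd one_pos this
    omega
  have hpos : 0 < Fintype.card ι := Fintype.card_pos_iff.2 ⟨i₀⟩
  obtain ⟨α, hα⟩ := exists_roots_of_newton (Fintype.card ι - 1)
    (fun n => ∑ g ∈ monics (ZMod p) n, chiP ψ t b g) (sSum (chiP ψ t b)) (by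
      have : monics (ZMod p) 0 = {1} := by
        ext g
        rw [mem_monics, Finset.mem_singleton]
        constructor
        · rintro ⟨h1, h2⟩
          exact h1.natDegree_eq_zero.1 h2
        · rintro rfl
          exact ⟨monic_one, natDegree_one⟩
      simp only [this, Finset.sum_singleton, chiP_one])
    (fun n hn => sum_monics_zero ψ t ht ht0 b i₀ hi₀ (by omega))
    (fun n => newton_monics (chiP ψ t b) (chiP_one ψ t b) (chiP_mul ψ t b) n)
  have hαb : ∀ i, ‖α i ^ 2‖ ≤ p := by
    refine power_sum_bound (fun i => α i ^ 2) p
      (2 * p * (d * d * (20 * (∑ i, b i) + 20)) + p * Fintype.card ι : ℕ)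
      (by exact_mod_cast hp.pos) fun μ hμ => ?_
    have hfin : Finite (GaloisField p (μ + μ)) := inferInstance
    let _ : Fintype (GaloisField p (μ + μ)) := Fintype.ofFinite _
    have hcard : Fintype.card (GaloisField p (μ + μ)) = p ^ (μ + μ) := by
      rw [← Nat.card_eq_fintype_card, GaloisField.card p _ (by omega)]
    have h1 := sum_bound (F := GaloisField p (μ + μ)) μ (by omega) hcard hdp ψ hψd hψ1 t ht ht0 b
      hb0 hb
    rw [sum_eq_sSum ψ t ht0 b, GaloisField.finrank p (by omega : μ + μ ≠ 0), hα _ (by omega),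
      norm_neg] at h1
    have h2 : ∀ i, (α i ^ 2) ^ μ = α i ^ (μ + μ) := fun i => by rw [← pow_mul, two_mul]
    simp only [h2]
    exact h1
  have h1 := sum_eq_sSum (F := ZMod p) ψ t ht0 b
  rw [Module.finrank_self, hα 1 le_rfl] at h1
  simp only [Algebra.norm_self, MonoidHom.id_apply, Algebra.algebraMap_self, RingHom.id_apply] at h1
  rw [h1, norm_neg]
  refine (norm_sum_le _ _).trans ?_
  refine (Finset.sum_le_card_nsmul _ _ (Real.sqrt p) fun i _ => ?_).trans ?_
  · rw [pow_one]
    apply Real.le_sqrt_of_sq_le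
    rw [← norm_pow]
    exact hαb i
  · simp

lemma weil_shift {ι : Type*} [Fintype ι] {p : ℕ} [Fact p.Prime] {d : ℕ} (hd0 : 0 < d)
    (hdp : d ∣ p - 1) (ψ : MulChar (ZMod p) ℂ) (hψ : orderOf ψ = d)
    (t : ι → ZMod p) (ht : Function.Injective t) (ht0 : ∀ i, t i ≠ 0) (j : ι → ℕ)
    (hj0 : ∀ i, 0 < j i) (hj : ¬ ∀ i, d ∣ j i) :
    ‖∑ x : ZMod p, ψ (∏ i, (1 + t i * x) ^ j i)‖ ≤ ((Fintype.card ι - 1 : ℕ) : ℝ) * Real.sqrt p := by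
  set e : ℕ := Nat.gcd d (Finset.univ.gcd j) with he
  have he0 : 0 < e := Nat.gcd_pos_of_pos_left _ hd0
  obtain ⟨d', hd'⟩ : e ∣ d := Nat.gcd_dvd_left _ _
  have hej : ∀ i, e ∣ j i := fun i =>
    (Nat.gcd_dvd_right _ _).trans (Finset.gcd_dvd (Finset.mem_univ i))
  choose b hb using hej
  have hd'0 : 0 < d' := by
    rcases Nat.eq_zero_or_pos d' with h | h
    · subst h; omega
    · exact h
  have hd'1 : 1 < d' := by
    by_contra h
    have h1 : d' = 1 := by omega
    rw [h1, mul_one] at hd'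
    exact hj fun i => by rw [hd', hb i]; exact dvd_mul_right _ _
  have hord : orderOf (ψ ^ e) = d' := by
    rw [orderOf_pow_of_dvd he0.ne' (by rw [hψ]; exact ⟨d', hd'⟩), hψ]
    conv_lhs => rw [hd']
    exact Nat.mul_div_cancel_left _ he0
  have h := weil_core hd'1 ((Dvd.intro_left e hd'.symm).trans hdp) (ψ ^ e) hord t ht ht0 b
    (fun i => by
      rcases Nat.eq_zero_or_pos (b i) with h | h
      · have := hj0 i; rw [hb i, h] at this; omega
      · exact h)
    (fun n hn => by
      have h1 : ∀ i, d ∣ n * j i := by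
        intro i
        rw [hb i, hd', show n * (e * b i) = e * (n * b i) by ring]
        exact Nat.mul_dvd_mul_left e (hn i)
      have h2 : d ∣ n * Finset.univ.gcd j := by
        have := Finset.dvd_gcd (s := Finset.univ) (f := fun i => n * j i) (a := d) fun i _ => h1 i
        rwa [Finset.gcd_mul_left, normalize_eq] at this
      have h3 : d ∣ n * e := by
        rw [he, ← Nat.gcd_mul_left]
        exact Nat.dvd_gcd (dvd_mul_left _ _) h2
      rw [mul_comm n e] at h3
      conv_lhs at h3 => rw [hd']
      exact Nat.dvd_of_mul_dvd_mul_left he0 h3)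
  suffices h4 : ∀ x : ZMod p, ψ (∏ i, (1 + t i * x) ^ j i) =
      (ψ ^ e) (∏ i, (1 + t i * x) ^ b i) by
    simp only [h4]
    exact h
  intro x
  rw [MulChar.pow_apply' _ he0.ne', ← map_pow, ← Finset.prod_pow]
  congr 1
  refine Finset.prod_congr rfl fun i _ => ?_
  rw [← pow_mul, hb i, mul_comm e]


lemma mem_of_char_eq_one {p : ℕ} [Fact p.Prime] (G : Subgroup (ZMod p)ˣ)
    (ψ : MulChar (ZMod p) ℂ) (hψ : orderOf ψ = G.index) (g : (ZMod p)ˣ) (hg : ψ g = 1) : g ∈ G := by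
  obtain ⟨γ, hγ⟩ := IsCyclic.exists_generator (α := (ZMod p)ˣ)
  obtain ⟨i, hi⟩ := mem_powers_iff_mem_zpowers.2 (hγ g)
  simp only at hi
  have h1 : ψ ^ i = 1 := by
    refine MulChar.ext fun a => ?_
    obtain ⟨k, hk⟩ := mem_powers_iff_mem_zpowers.2 (hγ a)
    simp only at hk
    rw [MulChar.pow_apply_coe, MulChar.one_apply_coe, ← hk, ← map_pow, ← Units.val_pow_eq_pow_val,
      ← pow_mul, mul_comm, pow_mul, hi, Units.val_pow_eq_pow_val, map_pow, hg, one_pow]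
  obtain ⟨m, rfl⟩ : G.index ∣ i := hψ ▸ orderOf_dvd_of_pow_eq_one h1
  rw [← hi, mul_comm, pow_mul]
  exact Subgroup.pow_index_mem G _

lemma sum_pow_root {d : ℕ} (z : ℂ) (hz : z ^ d = 1) :
    ∑ j ∈ Finset.Icc 1 d, z ^ j = if z = 1 then (d : ℂ) else 0 := by
  split_ifs with h
  · simp [h]
  · have h1 : ∑ j ∈ Finset.Icc 1 d, z ^ j = z * ∑ j ∈ Finset.range d, z ^ j := by
      rw [Finset.mul_sum]
      refine Finset.sum_nbij' (fun j => j - 1) (fun j => j + 1) ?_ ?_ ?_ ?_ ?_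
      · intro j hj; rw [Finset.mem_Icc] at hj; rw [Finset.mem_range]; omega
      · intro j hj; rw [Finset.mem_range] at hj; rw [Finset.mem_Icc]; omega
      · intro j hj; rw [Finset.mem_Icc] at hj; omega
      · intro j hj; omega
      · intro j hj
        rw [Finset.mem_Icc] at hj
        rw [← pow_succ', Nat.sub_add_cancel hj.1]
    rw [h1, geom_sum_eq h, hz]; simp

theorem count_shifted_progression_points (p : ℕ) [Fact p.Prime] (r : ℕ) (hr : 0 < r)
    (hrp : r < p) (G : Subgroup (ZMod p)ˣ) :
    (Nat.card {x : ZMod p // ∀ s : ℕ, 1 ≤ s → s ≤ r →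
        1 + (s : ZMod p) * x ∈ Units.val '' (G : Set (ZMod p)ˣ)} : ℝ) ≥
      ((Nat.card G : ℝ) / ((p : ℝ) - 1)) ^ r * (p : ℝ) - (r : ℝ) * Real.sqrt p := by
  classical
  have hp : p.Prime := Fact.out
  have hp2 := hp.two_le
  obtain ⟨d, hd⟩ : ∃ d, G.index = d := ⟨_, rfl⟩
  have hGd : Nat.card G * d = p - 1 := by
    rw [← hd, Subgroup.card_mul_index, Nat.card_eq_fintype_card, ZMod.card_units]
  have hd0 : 0 < d := by
    rcases Nat.eq_zero_or_pos d with h | h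
    · subst h; omega
    · exact h
  have hdp : d ∣ p - 1 := Dvd.intro_left _ hGd
  obtain ⟨ψ, hψ⟩ := MulChar.exists_mulChar_orderOf (ZMod p) (n := d)
    (by rwa [ZMod.card]) (Complex.isPrimitiveRoot_exp d hd0.ne')
  have hψd : ψ ^ d = 1 := hψ ▸ pow_orderOf_eq_one ψ
  let t : Fin r → ZMod p := fun i => ((i + 1 : ℕ) : ZMod p)
  have hval : ∀ i : Fin r, (t i).val = i + 1 := fun i =>
    ZMod.val_cast_of_lt (by have := i.2; omega)
  have ht : Function.Injective t := by
    intro i j hij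
    have h1 := hval i
    rw [hij, hval j] at h1
    exact Fin.ext (by omega)
  have ht0 : ∀ i, t i ≠ 0 := by
    intro i h
    have h1 := hval i
    rw [h, ZMod.val_zero] at h1
    omega
  -- the points where all the character values are one
  let E : Finset (ZMod p) := Finset.univ.filter fun x => ∀ i, ψ (1 + t i * x) = 1
  have hEN : E.card ≤ Nat.card {x : ZMod p // ∀ s : ℕ, 1 ≤ s → s ≤ r →
        1 + (s : ZMod p) * x ∈ Units.val '' (G : Set (ZMod p)ˣ)} := by
    rw [Nat.card_eq_fintype_card, Fintype.card_subtype]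
    refine Finset.card_le_card fun x hx => ?_
    rw [Finset.mem_filter] at hx ⊢
    refine ⟨Finset.mem_univ _, fun s hs1 hs2 => ?_⟩
    have h1 := hx.2 ⟨s - 1, by omega⟩
    have h2 : t ⟨s - 1, by omega⟩ = (s : ZMod p) := by
      simp only [t]; congr 1; omega
    rw [h2] at h1
    have h3 : IsUnit (1 + (s : ZMod p) * x) := by
      by_contra h
      rw [MulChar.map_nonunit ψ h] at h1
      exact zero_ne_one h1
    obtain ⟨u, hu⟩ := h3
    rw [← hu] at h1
    exact ⟨u, mem_of_char_eq_one G ψ (hψ.trans hd.symm) u h1, hu⟩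
  let J : Finset (Fin r → ℕ) := Fintype.piFinset fun _ => Finset.Icc 1 d
  let S : (Fin r → ℕ) → ℂ := fun j => ∑ x : ZMod p, ψ (∏ i, (1 + t i * x) ^ j i)
  have hJcard : J.card = d ^ r := by simp [J, Fintype.card_piFinset]
  have hin : ∀ y : ZMod p, ∑ j ∈ Finset.Icc 1 d, ψ y ^ j = if ψ y = 1 then (d : ℂ) else 0 := by
    intro y
    by_cases hy : IsUnit y
    · obtain ⟨u, rfl⟩ := hy
      exact sum_pow_root _ (by rw [← MulChar.pow_apply_coe, hψd, MulChar.one_apply_coe])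
    · rw [MulChar.map_nonunit ψ hy, if_neg zero_ne_one]
      refine Finset.sum_eq_zero fun j hj => zero_pow ?_
      have := (Finset.mem_Icc.1 hj).1
      omega
  have hexp : ∑ j ∈ J, S j = (d : ℂ) ^ r * E.card := by
    simp only [S]
    rw [Finset.sum_comm]
    have h1 : ∀ x : ZMod p, ∑ j ∈ J, ψ (∏ i, (1 + t i * x) ^ j i) =
        if ∀ i, ψ (1 + t i * x) = 1 then (d : ℂ) ^ r else 0 := by
      intro x
      have h2 := Finset.prod_univ_sum (fun _ : Fin r => Finset.Icc 1 d)
        (fun i k => ψ (1 + t i * x) ^ k)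
      simp only [hin] at h2
      simp only [map_prod, map_pow]
      rw [← h2]
      split_ifs with h
      · simp [h]
      · push Not at h
        obtain ⟨i, hi⟩ := h
        exact Finset.prod_eq_zero (Finset.mem_univ i) (if_neg hi)
    simp only [h1]
    rw [← Finset.sum_filter, Finset.sum_const, nsmul_eq_mul, mul_comm]
  set R : ℝ := ((r - 1 : ℕ) : ℝ) * Real.sqrt p with hR
  have hlow : ∀ j ∈ J, j ≠ (fun _ => d) → 0 ≤ (S j).re + R := by
    intro j hj hne
    rw [Fintype.mem_piFinset] at hj
    simp only [Finset.mem_Icc] at hj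
    have h1 := weil_shift hd0 hdp ψ hψ t ht ht0 j (fun i => (hj i).1) (by
      intro h
      exact hne (funext fun i => le_antisymm (hj i).2 (Nat.le_of_dvd (hj i).1 (h i))))
    rw [Fintype.card_fin] at h1
    have h2 := (abs_le.1 ((Complex.abs_re_le_norm (S j)).trans h1)).1
    linarith
  have hmain : (p : ℝ) - r ≤ (S fun _ => d).re := by
    have h1 : S (fun _ => d) =
        ((Finset.univ.filter fun x : ZMod p => ∀ i, 1 + t i * x ≠ 0).card : ℂ) := by
      simp only [S]
      rw [Finset.card_filter]
      push_cast
      refine Finset.sum_congr rfl fun x _ => ?_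
      rw [Finset.prod_pow, map_pow, ← MulChar.pow_apply' _ hd0.ne', hψd]
      split_ifs with h
      · exact MulChar.one_apply ((Finset.prod_ne_zero_iff.2 fun i _ => h i).isUnit)
      · push Not at h
        obtain ⟨i, hi⟩ := h
        rw [Finset.prod_eq_zero (Finset.mem_univ i) hi, MulChar.map_zero]
    have h2 := Finset.card_filter_add_card_filter_not (s := (Finset.univ : Finset (ZMod p)))
      (fun x => ∀ i, 1 + t i * x ≠ 0)
    rw [Finset.card_univ, ZMod.card] at h2
    have h3 : (Finset.univ.filter fun x : ZMod p => ¬ ∀ i, 1 + t i * x ≠ 0) ⊆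
        Finset.univ.image (fun i => -(t i)⁻¹) := by
      intro x hx
      have hx := (Finset.mem_filter.1 hx).2
      push Not at hx
      obtain ⟨i, hi⟩ := hx
      refine Finset.mem_image.2 ⟨i, Finset.mem_univ _, ?_⟩
      have hti := ht0 i
      field_simp
      linear_combination -hi
    have h4 := (Finset.card_le_card h3).trans Finset.card_image_le
    rw [Finset.card_univ, Fintype.card_fin] at h4
    rw [h1, Complex.natCast_re]
    have h5 : p ≤ (Finset.univ.filter fun x : ZMod p => ∀ i, 1 + t i * x ≠ 0).card + r := by omega
    have h6 : (p : ℝ) ≤ (Finset.univ.filter fun x : ZMod p => ∀ i, 1 + t i * x ≠ 0).card + r := by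
      exact_mod_cast h5
    linarith
  have hdJ : (fun _ => d) ∈ J := by
    rw [Fintype.mem_piFinset]
    intro i
    exact Finset.mem_Icc.2 ⟨hd0, le_rfl⟩
  have hRn : 0 ≤ R := by positivity
  have hkey : (S fun _ => d).re + R ≤ ∑ j ∈ J, ((S j).re + R) := by
    refine Finset.single_le_sum (f := fun j => (S j).re + R) (fun j hj => ?_) hdJ
    by_cases h : j = fun _ => d
    · rw [h]
      have : (r : ℝ) < p := by exact_mod_cast hrp
      linarith
    · exact hlow j hj h
  have hre : ∑ j ∈ J, (S j).re = (d : ℝ) ^ r * E.card := by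
    rw [← Complex.re_sum, hexp]
    have : ((d : ℂ) ^ r * E.card) = (((d : ℝ) ^ r * E.card : ℝ) : ℂ) := by push_cast; rfl
    rw [this, Complex.ofReal_re]
  rw [Finset.sum_add_distrib, hre, Finset.sum_const, hJcard, nsmul_eq_mul] at hkey
  push_cast at hkey
  have hquot : (Nat.card G : ℝ) / ((p : ℝ) - 1) = 1 / d := by
    have h1 : (Nat.card G : ℝ) * d = (p : ℝ) - 1 := by
      have := congrArg (fun z : ℕ => (z : ℝ)) hGd
      rw [Nat.cast_sub (by omega)] at this
      push_cast at this
      exact this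
    have h2 : (0 : ℝ) < (p : ℝ) - 1 := by
      have : (2 : ℝ) ≤ p := by exact_mod_cast hp2
      linarith
    have h3 : (0 : ℝ) < d := by exact_mod_cast hd0
    rw [div_eq_div_iff h2.ne' h3.ne', h1, one_mul]
  rw [hquot, ge_iff_le, one_div, inv_pow]
  refine le_trans ?_ (Nat.cast_le.2 hEN)
  have hD1 : (1 : ℝ) ≤ (d : ℝ) ^ r := one_le_pow₀ (by exact_mod_cast hd0)
  have hs1 : (1 : ℝ) ≤ Real.sqrt p := by
    rw [Real.one_le_sqrt]; exact_mod_cast hp.one_lt.le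
  have hr1 : ((r - 1 : ℕ) : ℝ) = r - 1 := by
    rw [Nat.cast_sub (by omega)]; simp
  have hrr : (1 : ℝ) ≤ r := by exact_mod_cast hr
  set D : ℝ := (d : ℝ) ^ r
  have hfin : (p : ℝ) ≤ D * (E.card + r * Real.sqrt p) := by
    rw [hR, hr1] at hkey
    nlinarith [mul_nonneg (sub_nonneg.2 hD1) (sub_nonneg.2 hs1),
      mul_nonneg (sub_nonneg.2 hrr) (sub_nonneg.2 hs1)]
  have hfin2 : D⁻¹ * p ≤ E.card + r * Real.sqrt p := by
    rw [inv_mul_le_iff₀ (by linarith)]; exact hfin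
  linarith
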